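/- arXiv:2412.04406 — 3 statements merged into one kernel-verified Lean document; each statement's English description precedes it below -/
import Mathlib

section
/- Let d ≥ 2 be an integer, 1 < p < ∞, and μ ≥ 0, ν ≥ 0 real numbers. Set a = μ + 1 + d/2 − d/p and b = d/p − d/2 + 1 + ν. Then there exists a constant C = C(μ, ν, d, p) > 0 such that for every Lipschitz function f : (0,∞) → ℂ with compact support in (0,∞), the function Tf defined by Tf(r) = ∫_{1/2}^{1} ( t^a · f(rt) − t^b · f(r/t) ) / ( (1 − t²) · t ) dt (an absolutely convergent integral for every r > 0) satisfies ( ∫₀^∞ |Tf(r)|^p dr/r )^{1/p} ≤ C · ( ∫₀^∞ |f(r)|^p dr/r )^{1/p}. -/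
open MeasureTheory

/-!
In the coordinates `r = e^x`, `t = e^{-u}` the measure `dr/r` becomes Lebesgue measure and `T`
becomes convolution with a kernel supported on `|u| < log 2` and equal to `1 / (2u)` near `0` up to
a bounded error. Hence `T` is half the Hilbert transform plus convolutions with integrable kernels
and with a conjugate Poisson kernel.

The conjugate Poisson kernels `Q_y` are bounded on `L^p` uniformly in `y`. For `1 < p ≤ 2` and
`f ≥ 0` the Cauchy transform `F` of `f` has real part `P_y ⋆ f ≥ 0` and imaginary part `Q_y ⋆ f`,
the integral of `F ^ p` over a horizontal line vanishes, and
`|Im z| ^ p ≤ A (Re z) ^ p - B Re (z ^ p)` on the right half-plane. The case `p ≥ 2` follows by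
duality, and `y → 0` gives the Hilbert transform.
-/

section

open Set Filter Topology Asymptotics ContinuousLinearMap
open scoped ENNReal NNReal Real Convolution ComplexConjugate

theorem lintegral_mul_rpow_le {α : Type*} [MeasurableSpace α] {μ : Measure α} {p : ℝ}
    (hp : 1 ≤ p) {k h : α → ℝ≥0∞} (hk : AEMeasurable k μ) (hh : AEMeasurable h μ) :
    (∫⁻ x, k x * h x ∂μ) ^ p ≤ (∫⁻ x, k x ∂μ) ^ (p - 1) * ∫⁻ x, k x * h x ^ p ∂μ := by
  have hp0 : 0 < p := by linarith
  have hhν : AEMeasurable h (μ.withDensity k) := hh.mono_ac (withDensity_absolutelyContinuous μ k)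
  have key := eLpNorm'_le_eLpNorm'_mul_rpow_measure_univ one_pos hp hhν.aestronglyMeasurable
  simp only [eLpNorm', enorm_eq_self, ENNReal.rpow_one, div_one,
    withDensity_apply _ MeasurableSet.univ, Measure.restrict_univ,
    lintegral_withDensity_eq_lintegral_mul₀ hk hh,
    lintegral_withDensity_eq_lintegral_mul₀ hk (hh.pow_const p), Pi.mul_apply] at key
  calc (∫⁻ x, k x * h x ∂μ) ^ p
      ≤ ((∫⁻ x, k x * h x ^ p ∂μ) ^ (1 / p) * (∫⁻ x, k x ∂μ) ^ (1 - 1 / p)) ^ p := by gcongr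
    _ = (∫⁻ x, k x ∂μ) ^ (p - 1) * ∫⁻ x, k x * h x ^ p ∂μ := by
      rw [ENNReal.mul_rpow_of_nonneg _ _ hp0.le, ← ENNReal.rpow_mul, ← ENNReal.rpow_mul, sub_mul,
        one_div_mul_cancel hp0.ne', one_mul, ENNReal.rpow_one, mul_comm]

section Young

variable {G : Type*} [AddGroup G] [MeasurableSpace G] [MeasurableAdd₂ G] [MeasurableNeg G]
  {μ : Measure G} [SFinite μ] [μ.IsAddLeftInvariant]

theorem aemeasurable_comp_neg_add {β : Type*} [MeasurableSpace β] {f : G → β}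
    (hf : AEMeasurable f μ) (x : G) : AEMeasurable (fun y => f (-y + x)) μ := by
  have h : Measure.QuasiMeasurePreserving (fun y : G => -y + x) μ μ := by
    simpa [Function.comp_def] using (quasiMeasurePreserving_neg μ).comp
      (measurePreserving_add_left μ (-x)).quasiMeasurePreserving
  exact hf.comp_quasiMeasurePreserving h

theorem lintegral_lconvolution {k f : G → ℝ≥0∞} (hk : AEMeasurable k μ) (hf : AEMeasurable f μ) :
    ∫⁻ x, (k ⋆ₗ[μ] f) x ∂μ = (∫⁻ x, k x ∂μ) * ∫⁻ x, f x ∂μ := by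
  simp only [lconvolution_def]
  rw [lintegral_lintegral_swap (by simpa using by fun_prop), ← lintegral_mul_const'' _ hk]
  congr 1 with y
  have hfy : AEMeasurable (fun x => f (-y + x)) μ :=
    hf.comp_quasiMeasurePreserving (measurePreserving_add_left μ (-y)).quasiMeasurePreserving
  rw [lintegral_const_mul'' _ hfy, lintegral_add_left_eq_self]

theorem lintegral_lconvolution_rpow_le {p : ℝ} (hp : 1 ≤ p) {k f : G → ℝ≥0∞}
    (hk : AEMeasurable k μ) (hf : AEMeasurable f μ) :
    ∫⁻ x, (k ⋆ₗ[μ] f) x ^ p ∂μ ≤ (∫⁻ x, k x ∂μ) ^ p * ∫⁻ x, f x ^ p ∂μ := by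
  calc ∫⁻ x, (k ⋆ₗ[μ] f) x ^ p ∂μ
      ≤ ∫⁻ x, (∫⁻ y, k y ∂μ) ^ (p - 1) * (k ⋆ₗ[μ] fun y => f y ^ p) x ∂μ :=
        lintegral_mono fun x => lintegral_mul_rpow_le hp hk (aemeasurable_comp_neg_add hf x)
    _ = (∫⁻ x, k x ∂μ) ^ (p - 1) * ((∫⁻ x, k x ∂μ) * ∫⁻ x, f x ^ p ∂μ) := by
        rw [lintegral_const_mul'' _ (by fun_prop), lintegral_lconvolution hk (hf.pow_const p)]
    _ = (∫⁻ x, k x ∂μ) ^ p * ∫⁻ x, f x ^ p ∂μ := by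
        rw [← mul_assoc]
        nth_rw 2 [← ENNReal.rpow_one (∫⁻ x, k x ∂μ)]
        rw [← ENNReal.rpow_add_of_nonneg _ _ (by linarith) zero_le_one, sub_add_cancel]

end Young

theorem eLpNorm_convolution_le {G E : Type*} [AddCommGroup G] [MeasurableSpace G]
    [MeasurableAdd₂ G] [MeasurableNeg G] {μ : Measure G} [SFinite μ] [μ.IsAddLeftInvariant]
    [NormedAddCommGroup E] [NormedSpace ℝ E] {p : ℝ≥0} (hp : 1 ≤ p) {k : G → ℝ} {f : G → E}
    (hk : AEStronglyMeasurable k μ) (hf : AEStronglyMeasurable f μ) :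
    eLpNorm (k ⋆[lsmul ℝ ℝ, μ] f) p μ ≤ eLpNorm k 1 μ * eLpNorm f p μ := by
  have hp0 : p ≠ 0 := (zero_lt_one.trans_le hp).ne'
  rw [← ENNReal.rpow_le_rpow_iff (z := p) (by positivity),
    ENNReal.mul_rpow_of_nonneg _ _ p.coe_nonneg,
    eLpNorm_nnreal_pow_eq_lintegral hp0, eLpNorm_nnreal_pow_eq_lintegral hp0,
    eLpNorm_one_eq_lintegral_enorm]
  refine (lintegral_mono fun x => ?_).trans
    (lintegral_lconvolution_rpow_le (by exact_mod_cast hp) hk.enorm hf.enorm)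
  gcongr
  refine (enorm_integral_le_lintegral_enorm _).trans_eq ?_
  simp only [lsmul_apply, enorm_smul, lconvolution_def, sub_eq_neg_add]

section UpperHalfPlane

variable {E : Type*} [NormedAddCommGroup E] [NormedSpace ℂ E] {G : ℂ → E} {y : ℝ}

theorem norm_intervalIntegral_horizontal_le (hG : DifferentiableOn ℂ G {z | 0 < z.im}) (hy : 0 < y)
    {R M : ℝ} (hR : 0 < R) (hM : ∀ z : ℂ, 0 < z.im → R ≤ ‖z‖ → ‖G z‖ ≤ M) :
    ‖∫ x in (-R)..R, G (x + y * Complex.I)‖ ≤ 4 * R * M := by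
  have hrect := Complex.integral_boundary_rect_eq_zero_of_differentiableOn G
    (⟨-R, y⟩ : ℂ) (⟨R, y + R⟩ : ℂ) <| hG.mono fun z hz => by
      have := hz.2
      simp only [mem_preimage, uIcc_of_le (by linarith : y ≤ y + R)] at this
      exact hy.trans_le this.1
  have htop : ‖∫ x in (-R)..R, G (x + (y + R : ℝ) * Complex.I)‖ ≤ M * |R - -R| := by
    refine intervalIntegral.norm_integral_le_of_norm_le_const fun x _ => hM _ ?_ ?_
    · simpa using by linarith
    · refine le_trans ?_ ((le_abs_self _).trans (Complex.abs_im_le_norm _))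
      simpa using hy.le
  have hside (s : ℝ) (hs : |s| = R) :
      ‖∫ t in y..(y + R), G (s + t * Complex.I)‖ ≤ M * |y + R - y| := by
    refine intervalIntegral.norm_integral_le_of_norm_le_const fun t ht => hM _ ?_ ?_
    · rw [uIoc_of_le (by linarith)] at ht
      simpa using hy.trans ht.1
    · exact le_trans (by simp [hs]) (Complex.abs_re_le_norm _)
  have hleft := hside (-R) (by rw [abs_neg, abs_of_pos hR])
  have hright := hside R (abs_of_pos hR)
  rw [show |R - -R| = 2 * R by rw [abs_of_pos] <;> linarith] at htop
  rw [add_sub_cancel_left, abs_of_pos hR] at hleft hright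
  have hbottom : ∫ x in (-R)..R, G (x + y * Complex.I)
      = (∫ x in (-R)..R, G (x + (y + R : ℝ) * Complex.I))
        - Complex.I • (∫ t in y..(y + R), G (R + t * Complex.I))
        + Complex.I • ∫ t in y..(y + R), G ((-R : ℝ) + t * Complex.I) := by
    rw [← sub_eq_zero, ← hrect]
    simp only
    abel
  calc ‖∫ x in (-R)..R, G (x + y * Complex.I)‖
      ≤ M * (2 * R) + M * R + M * R := by
        rw [hbottom]
        refine (norm_add_le _ _).trans (add_le_add ((norm_sub_le _ _).trans ?_) ?_)
        · rw [norm_smul, Complex.norm_I, one_mul]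
          exact add_le_add htop hright
        · rwa [norm_smul, Complex.norm_I, one_mul]
    _ = 4 * R * M := by ring

theorem tendsto_horizontal_cobounded (hy : 0 < y) :
    Tendsto (fun x : ℝ => (x + y * Complex.I : ℂ)) (cocompact ℝ)
      (Bornology.cobounded ℂ ⊓ 𝓟 {z | 0 < z.im}) := by
  refine tendsto_inf.2 ⟨?_, tendsto_principal.2 (.of_forall fun x => by simpa using hy)⟩
  rw [← tendsto_norm_atTop_iff_cobounded]
  refine tendsto_atTop_mono (fun x => ?_) (tendsto_norm_cocompact_atTop (E := ℝ))
  simpa using Complex.abs_re_le_norm (x + y * Complex.I)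

theorem integrable_horizontal_of_isBigO_rpow {p : ℝ} (hp : 1 < p)
    (hG : DifferentiableOn ℂ G {z | 0 < z.im})
    (hO : G =O[Bornology.cobounded ℂ ⊓ 𝓟 {z | 0 < z.im}] fun z => ‖z‖ ^ (-p)) (hy : 0 < y) :
    Integrable fun x : ℝ => G (x + y * Complex.I) := by
  have hcont : Continuous fun x : ℝ => G (x + y * Complex.I) :=
    hG.continuousOn.comp_continuous (by fun_prop) fun x => by simpa using hy
  have hle : (fun x : ℝ => ‖(x + y * Complex.I : ℂ)‖ ^ (-p)) =O[cocompact ℝ]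
      fun x : ℝ => (1 + ‖x‖) ^ (-p) := by
    refine .of_bound (2⁻¹ ^ (-p)) ?_
    filter_upwards [(tendsto_norm_cocompact_atTop (E := ℝ)).eventually_ge_atTop 1] with x hx
    have hxz : ‖x‖ ≤ ‖(x + y * Complex.I : ℂ)‖ := by
      simpa using Complex.abs_re_le_norm (x + y * Complex.I)
    rw [Real.norm_of_nonneg (by positivity), Real.norm_of_nonneg (by positivity),
      ← Real.mul_rpow (by positivity) (by positivity)]
    exact Real.rpow_le_rpow_of_nonpos (by positivity) (by linarith) (by linarith)
  refine hcont.locallyIntegrable.integrable_of_isBigO_cocompact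
    ((hO.comp_tendsto (tendsto_horizontal_cobounded hy)).trans hle) ?_
  exact (integrable_one_add_norm (by simpa using hp)).integrableAtFilter _

theorem integral_horizontal_eq_zero_of_isBigO_rpow {p : ℝ} (hp : 1 < p)
    (hG : DifferentiableOn ℂ G {z | 0 < z.im})
    (hO : G =O[Bornology.cobounded ℂ ⊓ 𝓟 {z | 0 < z.im}] fun z => ‖z‖ ^ (-p)) (hy : 0 < y) :
    ∫ x : ℝ, G (x + y * Complex.I) = 0 := by
  obtain ⟨C, hC⟩ := hO.bound
  have hbound : ∀ᶠ R : ℝ in atTop,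
      ‖∫ x in (-R)..R, G (x + y * Complex.I)‖ ≤ 4 * |C| * R ^ (1 - p) := by
    obtain ⟨R₀, -, hR₀⟩ := hasBasis_cobounded_norm.eventually_iff.1 (eventually_inf_principal.1 hC)
    filter_upwards [eventually_ge_atTop R₀, eventually_gt_atTop 0] with R hR hR0
    have hM (z : ℂ) (hz : 0 < z.im) (hRz : R ≤ ‖z‖) : ‖G z‖ ≤ |C| * R ^ (-p) := by
      refine (hR₀ (hR.trans hRz) hz).trans ?_
      rw [Real.norm_of_nonneg (by positivity)]
      gcongr ?_ * ?_
      · exact le_abs_self C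
      · exact Real.rpow_le_rpow_of_nonpos hR0 hRz (by linarith)
    refine (norm_intervalIntegral_horizontal_le hG hy hR0 hM).trans_eq ?_
    rw [Real.rpow_sub hR0, Real.rpow_one, Real.rpow_neg hR0.le]
    ring
  have hlim : Tendsto (fun R : ℝ => 4 * |C| * R ^ (1 - p)) atTop (𝓝 0) := by
    simpa using (tendsto_rpow_neg_atTop (by linarith : 0 < p - 1)).const_mul (4 * |C|)
  exact tendsto_nhds_unique (intervalIntegral_tendsto_integral
    (integrable_horizontal_of_isBigO_rpow hp hG hO hy) tendsto_neg_atTop_atBot tendsto_id)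
    (squeeze_zero_norm' hbound hlim)

end UpperHalfPlane

/-- The Poisson kernel `y / (u² + y²)` of the upper half-plane, without the customary factor
`1 / π`. -/
noncomputable def halfPlanePoissonKernel (y u : ℝ) : ℝ := y / (u ^ 2 + y ^ 2)

/-- The conjugate Poisson kernel `u / (u² + y²)` of the upper half-plane, without the customary
factor `1 / π`. Convolution with it regularises the Hilbert transform. -/
noncomputable def conjPoissonKernel (y u : ℝ) : ℝ := u / (u ^ 2 + y ^ 2)

/-- The Cauchy transform `∫ f(t) · i / (z - t) dt` of a function on the real line, normalised so
that its real and imaginary parts are the Poisson and the conjugate Poisson integrals of `f`. -/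
noncomputable def cauchyTransform (f : ℝ → ℝ) (z : ℂ) : ℂ :=
  ∫ t, (f t : ℂ) * (Complex.I / (z - t))

section Kernels

variable {y : ℝ}

theorem halfPlanePoissonKernel_pos (hy : 0 < y) (u : ℝ) : 0 < halfPlanePoissonKernel y u := by
  unfold halfPlanePoissonKernel
  positivity

theorem halfPlanePoissonKernel_eq_inv_mul (hy : 0 < y) (u : ℝ) :
    halfPlanePoissonKernel y u = y⁻¹ * (1 + (u / y) ^ 2)⁻¹ := by
  rw [halfPlanePoissonKernel]
  field_simp
  ring

theorem integrable_halfPlanePoissonKernel (hy : 0 < y) :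
    Integrable (halfPlanePoissonKernel y) := by
  simp only [funext (halfPlanePoissonKernel_eq_inv_mul hy)]
  exact (integrable_inv_one_add_sq.comp_div hy.ne').const_mul _

theorem integral_halfPlanePoissonKernel (hy : 0 < y) : ∫ u, halfPlanePoissonKernel y u = π := by
  simp only [halfPlanePoissonKernel_eq_inv_mul hy]
  rw [integral_const_mul, Measure.integral_comp_div (fun u => (1 + u ^ 2)⁻¹) y,
    integral_univ_inv_one_add_sq, abs_of_pos hy, smul_eq_mul, inv_mul_cancel_left₀ hy.ne']

theorem eLpNorm_one_halfPlanePoissonKernel (hy : 0 < y) :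
    eLpNorm (halfPlanePoissonKernel y) 1 volume = ENNReal.ofReal π := by
  rw [eLpNorm_one_eq_lintegral_enorm, ← integral_halfPlanePoissonKernel hy,
    ofReal_integral_eq_lintegral_ofReal (integrable_halfPlanePoissonKernel hy)
      (ae_of_all _ fun u => (halfPlanePoissonKernel_pos hy u).le)]
  simp only [Real.enorm_of_nonneg (halfPlanePoissonKernel_pos hy _).le]

theorem conjPoissonKernel_neg (y u : ℝ) : conjPoissonKernel y (-u) = -conjPoissonKernel y u := by
  simp only [conjPoissonKernel, neg_sq, neg_div]

theorem norm_conjPoissonKernel_le_inv (y u : ℝ) : ‖conjPoissonKernel y u‖ ≤ |u|⁻¹ := by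
  rcases eq_or_ne u 0 with rfl | hu
  · simp [conjPoissonKernel]
  rw [conjPoissonKernel, norm_div, Real.norm_eq_abs, Real.norm_of_nonneg (by positivity),
    inv_eq_one_div, div_le_div_iff₀ (by positivity) (by positivity)]
  nlinarith [sq_abs u, sq_nonneg y]

theorem norm_conjPoissonKernel_le (hy : 0 < y) (u : ℝ) : ‖conjPoissonKernel y u‖ ≤ y⁻¹ := by
  rw [conjPoissonKernel, norm_div, Real.norm_eq_abs, Real.norm_of_nonneg (by positivity),
    inv_eq_one_div, div_le_div_iff₀ (by positivity) hy]
  nlinarith [sq_abs u, sq_nonneg (|u| - y), abs_nonneg u]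

theorem continuous_conjPoissonKernel (hy : 0 < y) : Continuous (conjPoissonKernel y) := by
  unfold conjPoissonKernel
  exact continuous_id.div (by fun_prop) fun u => by positivity

end Kernels

section CauchyTransform

variable {f : ℝ → ℝ} {z : ℂ}

theorem im_le_norm_sub_ofReal (z : ℂ) (t : ℝ) : z.im ≤ ‖z - t‖ := by
  simpa using (le_abs_self _).trans (Complex.abs_im_le_norm (z - t))

theorem integrable_cauchyTransform (hf : Integrable f) (hz : 0 < z.im) :
    Integrable fun t : ℝ => (f t : ℂ) * (Complex.I / (z - t)) := by
  refine hf.ofReal.mul_bdd (c := 1 / z.im) (Measurable.aestronglyMeasurable (by fun_prop))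
    (ae_of_all _ fun t => ?_)
  rw [norm_div, Complex.norm_I]
  exact one_div_le_one_div_of_le hz (im_le_norm_sub_ofReal z t)

theorem re_I_div_sub_ofReal (z : ℂ) (t : ℝ) :
    (Complex.I / (z - t)).re = halfPlanePoissonKernel z.im (z.re - t) := by
  simp [Complex.div_re, Complex.normSq_apply, halfPlanePoissonKernel, sq]

theorem im_I_div_sub_ofReal (z : ℂ) (t : ℝ) :
    (Complex.I / (z - t)).im = conjPoissonKernel z.im (z.re - t) := by
  simp [Complex.div_im, Complex.normSq_apply, conjPoissonKernel, sq]

theorem re_cauchyTransform (hf : Integrable f) (hz : 0 < z.im) :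
    (cauchyTransform f z).re = (halfPlanePoissonKernel z.im ⋆ f) z.re := by
  rw [cauchyTransform, ← RCLike.re_to_complex, ← integral_re (integrable_cauchyTransform hf hz),
    convolution_lsmul_swap]
  simp only [RCLike.re_to_complex, Complex.re_ofReal_mul, re_I_div_sub_ofReal, smul_eq_mul,
    mul_comm]

theorem im_cauchyTransform (hf : Integrable f) (hz : 0 < z.im) :
    (cauchyTransform f z).im = (conjPoissonKernel z.im ⋆ f) z.re := by
  rw [cauchyTransform, ← RCLike.im_to_complex, ← integral_im (integrable_cauchyTransform hf hz),
    convolution_lsmul_swap]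
  simp only [RCLike.im_to_complex, Complex.im_ofReal_mul, im_I_div_sub_ofReal, smul_eq_mul,
    mul_comm]

theorem re_cauchyTransform_pos (hf : Integrable f) (hf0 : 0 ≤ f) (hne : ¬ f =ᵐ[volume] 0)
    (hz : 0 < z.im) : 0 < (cauchyTransform f z).re := by
  have hker (t : ℝ) : 0 < (Complex.I / (z - t)).re := by
    rw [re_I_div_sub_ofReal]
    exact halfPlanePoissonKernel_pos hz _
  have hint := (integrable_cauchyTransform hf hz).re
  rw [cauchyTransform, ← RCLike.re_to_complex, ← integral_re (integrable_cauchyTransform hf hz)]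
  simp only [RCLike.re_to_complex, Complex.re_ofReal_mul] at hint ⊢
  rw [integral_pos_iff_support_of_nonneg (fun t => mul_nonneg (hf0 t) (hker t).le) hint,
    Function.support_mul, Function.support_eq_univ fun t => (hker t).ne', inter_univ,
    pos_iff_ne_zero]
  exact hne

theorem differentiableOn_cauchyTransform (hf : Integrable f) :
    DifferentiableOn ℂ (cauchyTransform f) {z | 0 < z.im} := by
  intro z (hz : 0 < z.im)
  have hs : {w : ℂ | z.im / 2 < w.im} ∈ 𝓝 z :=
    (isOpen_lt continuous_const Complex.continuous_im).mem_nhds (by simpa using hz)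
  have hmeas (k : ℝ → ℂ) (hk : Measurable k) : AEStronglyMeasurable fun t => (f t : ℂ) * k t :=
    hf.ofReal.aestronglyMeasurable.mul hk.aestronglyMeasurable
  refine (hasDerivAt_integral_of_dominated_loc_of_deriv_le (𝕜 := ℂ) (μ := volume) (x₀ := z)
    (F := fun w t => (f t : ℂ) * (Complex.I / (w - t)))
    (F' := fun w t => (f t : ℂ) * (-Complex.I / (w - t) ^ 2))
    (bound := fun t => ‖f t‖ * (1 / (z.im / 2) ^ 2)) hs
    (.of_forall fun w => hmeas _ (by fun_prop)) (integrable_cauchyTransform hf hz)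
    (hmeas _ (by fun_prop)) (ae_of_all _ fun t w (hw : z.im / 2 < w.im) => ?_)
    (hf.norm.mul_const _) (ae_of_all _ fun t w (hw : z.im / 2 < w.im) => ?_)
    ).2.differentiableAt.differentiableWithinAt
  · have := im_le_norm_sub_ofReal w t
    rw [norm_mul, norm_div, norm_neg, Complex.norm_I, norm_pow, Complex.norm_real]
    gcongr
    linarith
  · have hne : w - t ≠ 0 := norm_pos_iff.1 <| by linarith [im_le_norm_sub_ofReal w t]
    simpa [div_eq_mul_inv] using!
      ((((hasDerivAt_id w).sub_const (t : ℂ)).fun_inv hne).const_mul Complex.I).const_mul (f t : ℂ)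

theorem cauchyTransform_isBigO_cobounded (hf : Integrable f) (hfc : HasCompactSupport f) :
    cauchyTransform f =O[Bornology.cobounded ℂ] fun z => ‖z‖⁻¹ := by
  obtain ⟨N, hN⟩ := hfc.isBounded.subset_closedBall 0
  refine .of_bound (2 * ∫ t, ‖f t‖) ?_
  filter_upwards [hasBasis_cobounded_norm.mem_of_mem (i := 2 * N) trivial,
    hasBasis_cobounded_norm.mem_of_mem (i := 1) trivial] with z (hz : 2 * N ≤ ‖z‖) (hz1 : 1 ≤ ‖z‖)
  rw [norm_inv, norm_norm, ← integral_const_mul, ← integral_mul_const]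
  refine norm_integral_le_of_norm_le ((hf.norm.const_mul _).mul_const _) (ae_of_all _ fun t => ?_)
  by_cases ht : t ∈ tsupport f
  · have htN : ‖(t : ℂ)‖ ≤ N := by simpa using hN ht
    have hdist : ‖z‖ / 2 ≤ ‖z - t‖ := by linarith [norm_sub_norm_le z t]
    rw [norm_mul, norm_div, Complex.norm_I, Complex.norm_real, mul_comm 2, mul_assoc]
    gcongr
    calc 1 / ‖z - t‖ ≤ 1 / (‖z‖ / 2) := by gcongr
      _ = 2 * ‖z‖⁻¹ := by field_simp
  · simp [image_eq_zero_of_notMem_tsupport ht]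

end CauchyTransform

theorem exists_abs_sin_rpow_le {p : ℝ} (hp : 1 < p) (hp2 : p ≤ 2) :
    ∃ A B : ℝ, 0 ≤ A ∧ ∀ θ : ℝ, |θ| ≤ π / 2 →
      |Real.sin θ| ^ p ≤ A * Real.cos θ ^ p - B * Real.cos (θ * p) := by
  -- `θ₀` lies between `π / (2p)` and `π / 2`: near `±π/2`, beyond `θ₀`, the term `-cos (pθ)` is
  -- bounded below by `c > 0`, while up to `θ₀` the term `cos θ ^ p` is.
  set θ₀ : ℝ := π * (1 + p) / (4 * p) with hθ₀
  have hpi := Real.pi_pos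
  have hpθ₀ : p * θ₀ = π * (1 + p) / 4 := by rw [hθ₀]; field_simp
  have hθ₀pos : 0 < θ₀ := by positivity
  have hθ₀lt : θ₀ < π / 2 := by
    rw [hθ₀, div_lt_div_iff₀ (by positivity) (by norm_num)]
    nlinarith
  have hcos₀ : 0 < Real.cos θ₀ := Real.cos_pos_of_mem_Ioo ⟨by linarith, hθ₀lt⟩
  obtain ⟨c, hc, hcpos⟩ : ∃ c, Real.cos (p * θ₀) = -c ∧ 0 < c := by
    refine ⟨-Real.cos (p * θ₀), (neg_neg _).symm, neg_pos.2 ?_⟩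
    rw [hpθ₀]
    apply Real.cos_neg_of_pi_div_two_lt_of_lt <;> nlinarith
  refine ⟨(1 + 1 / c) / Real.cos θ₀ ^ p, 1 / c, by positivity, fun θ hθ => ?_⟩
  have hsin : |Real.sin θ| ^ p ≤ 1 :=
    Real.rpow_le_one (abs_nonneg _) (Real.abs_sin_le_one _) (by linarith)
  have hcos : 0 ≤ Real.cos θ := Real.cos_nonneg_of_mem_Icc (abs_le.1 hθ)
  rcases le_total θ₀ |θ| with h | h
  · have hcosp : Real.cos (θ * p) ≤ -c := by
      rw [← hc, ← Real.cos_abs, abs_mul, abs_of_pos (by linarith : 0 < p), mul_comm]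
      apply Real.cos_le_cos_of_nonneg_of_le_pi (by positivity) (by nlinarith)
      gcongr
    have hA : 0 ≤ (1 + 1 / c) / Real.cos θ₀ ^ p * Real.cos θ ^ p := by positivity
    have hB : 1 / c * Real.cos (θ * p) ≤ -1 := by
      rw [one_div_mul_eq_div, div_le_iff₀ hcpos]
      linarith
    linarith
  · have hcosθ : Real.cos θ₀ ≤ Real.cos θ := by
      rw [← Real.cos_abs θ]
      exact Real.cos_le_cos_of_nonneg_of_le_pi (abs_nonneg _) (by linarith) h
    have hA : 1 + 1 / c ≤ (1 + 1 / c) / Real.cos θ₀ ^ p * Real.cos θ ^ p := by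
      rw [div_mul_eq_mul_div, le_div_iff₀ (by positivity)]
      gcongr
    have hB : 1 / c * Real.cos (θ * p) ≤ 1 / c :=
      mul_le_of_le_one_right (by positivity) (Real.cos_le_one _)
    linarith

theorem exists_abs_im_rpow_le {p : ℝ} (hp : 1 < p) (hp2 : p ≤ 2) :
    ∃ A B : ℝ, 0 ≤ A ∧ ∀ z : ℂ, 0 ≤ z.re →
      |z.im| ^ p ≤ A * z.re ^ p - B * (z ^ (p : ℂ)).re := by
  obtain ⟨A, B, hA, hAB⟩ := exists_abs_sin_rpow_le hp hp2
  refine ⟨A, B, hA, fun z hz => ?_⟩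
  have harg : |z.arg| ≤ π / 2 := Complex.abs_arg_le_pi_div_two_iff.2 hz
  calc |z.im| ^ p = ‖z‖ ^ p * |Real.sin z.arg| ^ p := by
        rw [← Real.mul_rpow (norm_nonneg _) (abs_nonneg _), ← Complex.norm_mul_sin_arg z, abs_mul,
          abs_norm]
    _ ≤ ‖z‖ ^ p * (A * Real.cos z.arg ^ p - B * Real.cos (z.arg * p)) := by gcongr; exact hAB _ harg
    _ = A * (‖z‖ * Real.cos z.arg) ^ p - B * (‖z‖ ^ p * Real.cos (z.arg * p)) := by
        rw [Real.mul_rpow (norm_nonneg _) (Real.cos_nonneg_of_mem_Icc (abs_le.1 harg))]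
        ring
    _ = A * z.re ^ p - B * (z ^ (p : ℂ)).re := by
        rw [Complex.norm_mul_cos_arg, Complex.cpow_ofReal_re]

section CauchyTransform

variable {f : ℝ → ℝ}

theorem differentiableOn_cauchyTransform_cpow (hf : Integrable f) (hf0 : 0 ≤ f)
    (hne : ¬ f =ᵐ[volume] 0) (s : ℂ) :
    DifferentiableOn ℂ (fun z => cauchyTransform f z ^ s) {z | 0 < z.im} :=
  (differentiableOn_cauchyTransform hf).cpow (differentiableOn_const s) fun _ hz =>
    Or.inl (re_cauchyTransform_pos hf hf0 hne hz)

theorem cauchyTransform_cpow_isBigO_cobounded (hf : Integrable f) (hfc : HasCompactSupport f)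
    {p : ℝ} (hp : 0 ≤ p) :
    (fun z => cauchyTransform f z ^ (p : ℂ)) =O[Bornology.cobounded ℂ] fun z => ‖z‖ ^ (-p) := by
  refine .of_norm_left ?_
  simp only [Complex.norm_cpow_real, Real.rpow_neg_eq_inv_rpow]
  exact (cauchyTransform_isBigO_cobounded hf hfc).norm_left.rpow hp
    (.of_forall fun z => by positivity)

theorem integrable_cauchyTransform_cpow_horizontal (hf : Integrable f) (hfc : HasCompactSupport f)
    (hf0 : 0 ≤ f) (hne : ¬ f =ᵐ[volume] 0) {p : ℝ} (hp : 1 < p) {y : ℝ} (hy : 0 < y) :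
    Integrable fun x : ℝ => cauchyTransform f (x + y * Complex.I) ^ (p : ℂ) :=
  integrable_horizontal_of_isBigO_rpow hp (differentiableOn_cauchyTransform_cpow hf hf0 hne p)
    ((cauchyTransform_cpow_isBigO_cobounded hf hfc (by linarith)).mono inf_le_left) hy

theorem integral_cauchyTransform_cpow_horizontal (hf : Integrable f) (hfc : HasCompactSupport f)
    (hf0 : 0 ≤ f) (hne : ¬ f =ᵐ[volume] 0) {p : ℝ} (hp : 1 < p) {y : ℝ} (hy : 0 < y) :
    ∫ x : ℝ, cauchyTransform f (x + y * Complex.I) ^ (p : ℂ) = 0 :=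
  integral_horizontal_eq_zero_of_isBigO_rpow hp (differentiableOn_cauchyTransform_cpow hf hf0 hne p)
    ((cauchyTransform_cpow_isBigO_cobounded hf hfc (by linarith)).mono inf_le_left) hy

theorem memLp_cauchyTransform_horizontal (hf : Integrable f) (hfc : HasCompactSupport f)
    (hf0 : 0 ≤ f) (hne : ¬ f =ᵐ[volume] 0) {p : ℝ≥0} (hp : 1 < p) {y : ℝ} (hy : 0 < y) :
    MemLp (fun x : ℝ => cauchyTransform f (x + y * Complex.I)) p := by
  have hcont : Continuous fun x : ℝ => cauchyTransform f (x + y * Complex.I) :=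
    (differentiableOn_cauchyTransform hf).continuousOn.comp_continuous (by fun_prop)
      fun x => by simpa using hy
  rw [← integrable_norm_rpow_iff hcont.aestronglyMeasurable (by positivity) ENNReal.coe_ne_top]
  simpa only [Complex.norm_cpow_real] using
    (integrable_cauchyTransform_cpow_horizontal hf hfc hf0 hne (by exact_mod_cast hp) hy).norm

theorem integral_abs_im_cauchyTransform_rpow_le (hf : Integrable f) (hfc : HasCompactSupport f)
    (hf0 : 0 ≤ f) (hne : ¬ f =ᵐ[volume] 0) {p : ℝ≥0} {A B : ℝ} (hp : 1 < p)
    (hAB : ∀ z : ℂ, 0 ≤ z.re → |z.im| ^ (p : ℝ) ≤ A * z.re ^ (p : ℝ) - B * (z ^ (p : ℂ)).re)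
    {y : ℝ} (hy : 0 < y) :
    ∫ x : ℝ, |(cauchyTransform f (x + y * Complex.I)).im| ^ (p : ℝ)
      ≤ A * ∫ x : ℝ, |(cauchyTransform f (x + y * Complex.I)).re| ^ (p : ℝ) := by
  have hp1 : (1 : ℝ) < p := by exact_mod_cast hp
  set F : ℝ → ℂ := fun x => cauchyTransform f (x + y * Complex.I)
  have hmem : MemLp F p := memLp_cauchyTransform_horizontal hf hfc hf0 hne hp hy
  have hre (x : ℝ) : 0 ≤ (F x).re := (re_cauchyTransform_pos hf hf0 hne (by simpa using hy)).le
  have hint (g : ℝ → ℝ) (hg : MemLp g p) : Integrable fun x => |g x| ^ (p : ℝ) :=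
    by simpa using hg.integrable_norm_rpow (by positivity) ENNReal.coe_ne_top
  have hmre : MemLp (fun x => (F x).re) p := hmem.re
  have hmim : MemLp (fun x => (F x).im) p := hmem.im
  have hpow : Integrable fun x => F x ^ (p : ℂ) :=
    integrable_cauchyTransform_cpow_horizontal hf hfc hf0 hne hp1 hy
  have hpowre : Integrable fun x => (F x ^ (p : ℂ)).re := hpow.re
  have hpow0 : ∫ x, (F x ^ (p : ℂ)).re = 0 := by
    simpa using! (integral_re hpow).trans (congrArg Complex.re
      (integral_cauchyTransform_cpow_horizontal hf hfc hf0 hne hp1 hy))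
  calc ∫ x, |(F x).im| ^ (p : ℝ)
      ≤ ∫ x, (A * |(F x).re| ^ (p : ℝ) - B * (F x ^ (p : ℂ)).re) := by
        refine integral_mono (hint _ hmim)
          (((hint _ hmre).const_mul A).sub (hpowre.const_mul B)) fun x => ?_
        simpa only [abs_of_nonneg (hre x)] using hAB (F x) (hre x)
    _ = A * ∫ x, |(F x).re| ^ (p : ℝ) := by
        rw [integral_sub ((hint _ hmre).const_mul A) (hpowre.const_mul B), integral_const_mul,
          integral_const_mul]
        simp [hpow0]

theorem eLpNorm_im_cauchyTransform_le (hf : Integrable f) (hfc : HasCompactSupport f)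
    (hf0 : 0 ≤ f) {p : ℝ≥0} {A B : ℝ} (hp : 1 < p) (hA : 0 ≤ A)
    (hAB : ∀ z : ℂ, 0 ≤ z.re → |z.im| ^ (p : ℝ) ≤ A * z.re ^ (p : ℝ) - B * (z ^ (p : ℂ)).re)
    {y : ℝ} (hy : 0 < y) :
    eLpNorm (fun x : ℝ => (cauchyTransform f (x + y * Complex.I)).im) p volume
      ≤ ENNReal.ofReal (A ^ (p : ℝ)⁻¹) *
        eLpNorm (fun x : ℝ => (cauchyTransform f (x + y * Complex.I)).re) p volume := by
  by_cases hne : f =ᵐ[volume] 0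
  · have hzero (z : ℂ) : cauchyTransform f z = 0 :=
      integral_eq_zero_of_ae <| hne.mono fun t ht => by simp [ht]
    simp [hzero]
  have hp0 : (p : ℝ≥0∞) ≠ 0 := by positivity
  have hmem := memLp_cauchyTransform_horizontal hf hfc hf0 hne hp hy
  have hmre : MemLp (fun x : ℝ => (cauchyTransform f (x + y * Complex.I)).re) p := hmem.re
  have hmim : MemLp (fun x : ℝ => (cauchyTransform f (x + y * Complex.I)).im) p := hmem.im
  rw [hmim.eLpNorm_eq_integral_rpow_norm hp0 ENNReal.coe_ne_top,
    hmre.eLpNorm_eq_integral_rpow_norm hp0 ENNReal.coe_ne_top, ENNReal.coe_toReal,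
    ← ENNReal.ofReal_mul (by positivity), ← Real.mul_rpow hA (by positivity)]
  gcongr
  exact integral_abs_im_cauchyTransform_rpow_le hf hfc hf0 hne hp hAB hy

end CauchyTransform

theorem exists_eLpNorm_conjPoissonKernel_convolution_le_of_nonneg {p : ℝ≥0} (hp : 1 < p)
    (hp2 : p ≤ 2) :
    ∃ C : ℝ≥0, ∀ y : ℝ, 0 < y → ∀ f : ℝ → ℝ, 0 ≤ f → Integrable f → HasCompactSupport f →
      eLpNorm (conjPoissonKernel y ⋆ f) p volume ≤ C * eLpNorm f p volume := by
  obtain ⟨A, B, hA, hAB⟩ := exists_abs_im_rpow_le (p := p) (by exact_mod_cast hp)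
    (by exact_mod_cast hp2)
  refine ⟨(A ^ (p : ℝ)⁻¹ * π).toNNReal, fun y hy f hf0 hf hfc => ?_⟩
  have him : (conjPoissonKernel y ⋆ f) = fun x : ℝ => (cauchyTransform f (x + y * Complex.I)).im :=
    funext fun x => by simp [im_cauchyTransform hf (z := x + y * Complex.I) (by simpa using hy)]
  have hre : (fun x : ℝ => (cauchyTransform f (x + y * Complex.I)).re)
      = halfPlanePoissonKernel y ⋆ f :=
    funext fun x => by simp [re_cauchyTransform hf (z := x + y * Complex.I) (by simpa using hy)]
  have hle_re := eLpNorm_im_cauchyTransform_le hf hfc hf0 hp hA hAB hy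
  have hle := eLpNorm_convolution_le hp.le
    (integrable_halfPlanePoissonKernel hy).aestronglyMeasurable hf.aestronglyMeasurable
  rw [hre, ← him] at hle_re
  rw [eLpNorm_one_halfPlanePoissonKernel hy] at hle
  refine hle_re.trans ((mul_le_mul_right hle _).trans_eq ?_)
  rw [← mul_assoc, ← ENNReal.ofReal_mul (by positivity), ENNReal.ofReal]

/-- Convolution with `k` maps `L^p` to `L^p` with norm at most `C`, as tested on integrable complex
functions with compact support. For the kernels considered here the convolution of `k` with such a
function is given by an absolutely convergent integral. -/
def HasConvolutionBound (k : ℝ → ℝ) (p C : ℝ≥0) : Prop :=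
  ∀ f : ℝ → ℂ, Integrable f → HasCompactSupport f →
    eLpNorm (k ⋆ f) p volume ≤ C * eLpNorm f p volume

section BoundedKernel

variable {k : ℝ → ℝ} {M : ℝ}

theorem integrable_bounded_kernel_smul {E : Type*} [NormedAddCommGroup E] [NormedSpace ℝ E]
    (hk : Continuous k) (hM : ∀ u, ‖k u‖ ≤ M) {f : ℝ → E} (hf : Integrable f) (x : ℝ) :
    Integrable fun t => k (x - t) • f t :=
  hf.bdd_smul M (by fun_prop) (.of_forall fun t => hM (x - t))

theorem continuous_bounded_kernel_convolution {E : Type*} [NormedAddCommGroup E] [NormedSpace ℝ E]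
    (hk : Continuous k) (hM : ∀ u, ‖k u‖ ≤ M) {f : ℝ → E} (hf : Integrable f) :
    Continuous (k ⋆ f) :=
  BddAbove.continuous_convolution_left_of_integrable _ ⟨M, forall_mem_range.2 hM⟩ hk hf

theorem eLpNorm_convolution_real_le_of_nonneg (hk : Continuous k) (hM : ∀ u, ‖k u‖ ≤ M)
    {p C : ℝ≥0} (hp : 1 ≤ p)
    (hC : ∀ f : ℝ → ℝ, 0 ≤ f → Integrable f → HasCompactSupport f →
      eLpNorm (k ⋆ f) p volume ≤ C * eLpNorm f p volume)
    {f : ℝ → ℝ} (hf : Integrable f) (hfc : HasCompactSupport f) :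
    eLpNorm (k ⋆ f) p volume ≤ (2 * C : ℝ≥0) * eLpNorm f p volume := by
  set fpos : ℝ → ℝ := fun t => max (f t) 0
  set fneg : ℝ → ℝ := fun t => max (-f t) 0
  have hsub : k ⋆ f = k ⋆ fpos - k ⋆ fneg := by
    ext x
    simp only [Pi.sub_apply, convolution_lsmul_swap]
    rw [← integral_sub (integrable_bounded_kernel_smul hk hM hf.pos_part x)
      (integrable_bounded_kernel_smul hk hM hf.neg_part x)]
    simp only [← smul_sub, max_zero_sub_eq_self]
  have hpos : eLpNorm (k ⋆ fpos) p volume ≤ C * eLpNorm f p volume := by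
    refine (hC fpos (fun t => le_max_right _ _) hf.pos_part
      (hfc.comp_left (g := fun a => max a 0) (max_self 0))).trans ?_
    gcongr
    exact eLpNorm_mono fun t => by
      simpa [fpos, abs_of_nonneg (le_max_right (f t) 0)] using le_abs_self (f t)
  have hneg : eLpNorm (k ⋆ fneg) p volume ≤ C * eLpNorm f p volume := by
    refine (hC fneg (fun t => le_max_right _ _) hf.neg_part
      (hfc.comp_left (g := fun a => max (-a) 0) (by simp))).trans ?_
    gcongr
    exact eLpNorm_mono fun t => by
      simpa [fneg, abs_of_nonneg (le_max_right (-f t) 0)] using neg_le_abs (f t)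
  calc eLpNorm (k ⋆ f) p volume ≤ eLpNorm (k ⋆ fpos) p volume + eLpNorm (k ⋆ fneg) p volume := by
        rw [hsub]
        exact eLpNorm_sub_le
          (continuous_bounded_kernel_convolution hk hM hf.pos_part).aestronglyMeasurable
          (continuous_bounded_kernel_convolution hk hM hf.neg_part).aestronglyMeasurable
          (by exact_mod_cast hp)
    _ ≤ C * eLpNorm f p volume + C * eLpNorm f p volume := add_le_add hpos hneg
    _ = (2 * C : ℝ≥0) * eLpNorm f p volume := by
        push_cast
        ring

theorem hasConvolutionBound_of_real (hk : Continuous k) (hM : ∀ u, ‖k u‖ ≤ M)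
    {p C : ℝ≥0} (hp : 1 ≤ p)
    (hC : ∀ f : ℝ → ℝ, Integrable f → HasCompactSupport f →
      eLpNorm (k ⋆ f) p volume ≤ C * eLpNorm f p volume) :
    HasConvolutionBound k p (2 * C) := by
  intro f hf hfc
  set fre : ℝ → ℝ := fun t => (f t).re
  set fim : ℝ → ℝ := fun t => (f t).im
  have hfre : Integrable fre := hf.re
  have hfim : Integrable fim := hf.im
  have hsum (x : ℝ) : (k ⋆ f) x = (k ⋆ fre) x + (k ⋆ fim) x * Complex.I := by
    have hint := integrable_bounded_kernel_smul hk hM hf x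
    simp only [convolution_lsmul_swap]
    rw [← integral_re_add_im hint]
    simp [fre, fim]
  have hnorm (x : ℝ) : ‖(k ⋆ f) x‖ ≤ ‖(fun x => ‖(k ⋆ fre) x‖ + ‖(k ⋆ fim) x‖) x‖ := by
    rw [hsum, Real.norm_of_nonneg (by positivity)]
    simpa using norm_add_le ((k ⋆ fre) x : ℂ) ((k ⋆ fim) x * Complex.I)
  have hcre : eLpNorm (k ⋆ fre) p volume ≤ C * eLpNorm f p volume := by
    refine (hC fre hfre (hfc.comp_left Complex.zero_re)).trans ?_
    gcongr
    exact eLpNorm_mono fun t => Complex.abs_re_le_norm (f t)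
  have hcim : eLpNorm (k ⋆ fim) p volume ≤ C * eLpNorm f p volume := by
    refine (hC fim hfim (hfc.comp_left Complex.zero_im)).trans ?_
    gcongr
    exact eLpNorm_mono fun t => Complex.abs_im_le_norm (f t)
  calc eLpNorm (k ⋆ f) p volume
      ≤ eLpNorm (fun x => ‖(k ⋆ fre) x‖) p volume + eLpNorm (fun x => ‖(k ⋆ fim) x‖) p volume := by
        refine (eLpNorm_mono hnorm).trans (eLpNorm_add_le ?_ ?_ (by exact_mod_cast hp))
        · exact (continuous_bounded_kernel_convolution hk hM hfre).norm.aestronglyMeasurable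
        · exact (continuous_bounded_kernel_convolution hk hM hfim).norm.aestronglyMeasurable
    _ ≤ C * eLpNorm f p volume + C * eLpNorm f p volume := by
        simp only [eLpNorm_norm]
        exact add_le_add hcre hcim
    _ = (2 * C : ℝ≥0) * eLpNorm f p volume := by
        push_cast
        ring

theorem integral_convolution_mul_eq_neg_of_odd (hk : Continuous k) (hM : ∀ u, ‖k u‖ ≤ M)
    (hodd : ∀ u, k (-u) = -k u) {f g : ℝ → ℂ} (hf : Integrable f) (hg : Integrable g) :
    ∫ x, (k ⋆ f) x * g x = -∫ t, f t * (k ⋆ g) t := by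
  have hint : Integrable fun z : ℝ × ℝ => k (z.1 - z.2) • (f z.2 * g z.1) := by
    have hfg : Integrable (fun z : ℝ × ℝ => f z.2 * g z.1) (volume.prod volume) := by
      simpa only [mul_comm] using hg.mul_prod hf
    exact hfg.bdd_smul M (by fun_prop) (.of_forall fun z => hM (z.1 - z.2))
  calc ∫ x, (k ⋆ f) x * g x = ∫ x, ∫ t, k (x - t) • (f t * g x) := by
        simp only [convolution_lsmul_swap, ← integral_mul_const, smul_mul_assoc]
    _ = ∫ t, ∫ x, k (x - t) • (f t * g x) := integral_integral_swap hint
    _ = ∫ t, -(f t * (k ⋆ g) t) := by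
        refine integral_congr_ae (.of_forall fun t => ?_)
        simp only [convolution_lsmul_swap, ← integral_const_mul, ← integral_neg]
        congr 1 with x
        rw [← neg_sub t x, hodd, neg_smul, mul_smul_comm]
    _ = -∫ t, f t * (k ⋆ g) t := integral_neg _

end BoundedKernel

/-- The function `|z| ^ (p - 2) z̄`, for which Hölder's inequality with exponent `p` is an equality
when paired with `z`. Its value at `0` is `0`. -/
noncomputable def dualPower (p : ℝ) (z : ℂ) : ℂ := (‖z‖ ^ (p - 2) : ℝ) * conj z

section Duality

theorem mul_dualPower {p : ℝ} (hp : p ≠ 0) (z : ℂ) : z * dualPower p z = (‖z‖ ^ p : ℝ) := by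
  rcases eq_or_ne z 0 with rfl | hz
  · simp [Real.zero_rpow hp]
  rw [dualPower, mul_left_comm, Complex.mul_conj', ← Complex.ofReal_pow, ← Complex.ofReal_mul,
    ← Real.rpow_natCast, ← Real.rpow_add (norm_pos_iff.2 hz)]
  norm_num

theorem norm_dualPower {p : ℝ} (hp : p ≠ 1) (z : ℂ) : ‖dualPower p z‖ = ‖z‖ ^ (p - 1) := by
  rcases eq_or_ne z 0 with rfl | hz
  · simp [dualPower, Real.zero_rpow (sub_ne_zero.2 hp)]
  rw [dualPower, norm_mul, Complex.norm_real, Complex.norm_conj,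
    Real.norm_of_nonneg (by positivity), ← Real.rpow_add_one (norm_ne_zero_iff.2 hz)]
  ring_nf

theorem measurable_dualPower (p : ℝ) : Measurable (dualPower p) := by
  unfold dualPower
  fun_prop

variable {α : Type*} [MeasurableSpace α] {μ : Measure α}

theorem eLpNorm_dualPower_comp {p q : ℝ≥0} (hpq : p.HolderConjugate q) (h : α → ℂ) :
    eLpNorm (fun x => dualPower p (h x)) q μ = eLpNorm h p μ ^ (p - 1 : ℝ) := by
  have hpq' : (p : ℝ).HolderConjugate q := NNReal.holderConjugate_coe_iff.2 hpq
  have hexp : (q : ℝ≥0∞) * ENNReal.ofReal (p - 1 : ℝ) = p := by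
    rw [← ENNReal.ofReal_coe_nnreal, ← ENNReal.ofReal_mul q.coe_nonneg, mul_comm,
      hpq'.sub_one_mul_conj, ENNReal.ofReal_coe_nnreal]
  rw [← hexp, ← eLpNorm_norm_rpow h hpq'.sub_one_pos]
  refine eLpNorm_congr_norm_ae (.of_forall fun x => ?_)
  rw [norm_dualPower hpq'.lt.ne', Real.norm_of_nonneg (by positivity)]

theorem eLpNorm_le_of_enorm_integral_mul_dualPower_le {p : ℝ≥0} (hp : p ≠ 0) {h : α → ℂ}
    (hh : MemLp h p μ) {K : ℝ≥0∞}
    (hK : ‖∫ x, h x * dualPower p (h x) ∂μ‖ₑ ≤ K * eLpNorm h p μ ^ (p - 1 : ℝ)) :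
    eLpNorm h p μ ≤ K := by
  rcases eq_or_ne (eLpNorm h p μ) 0 with h0 | h0
  · simp [h0]
  have hint : Integrable (fun x => ‖h x‖ ^ (p : ℝ)) μ := by
    simpa using hh.integrable_norm_rpow (by simpa) (by simp)
  have hpow : ‖∫ x, h x * dualPower p (h x) ∂μ‖ₑ = eLpNorm h p μ ^ (p : ℝ) := by
    simp only [mul_dualPower (NNReal.coe_ne_zero.2 hp)]
    rw [integral_complex_ofReal, ← ofReal_norm, Complex.norm_real,
      Real.norm_of_nonneg (by positivity), eLpNorm_nnreal_pow_eq_lintegral hp,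
      ofReal_integral_eq_lintegral_ofReal hint (.of_forall fun x => by positivity)]
    simp [← ENNReal.ofReal_rpow_of_nonneg, ofReal_norm]
  rw [hpow, ← ENNReal.div_le_iff_le_mul (by simp [h0, hh.2.ne]) (by simp [h0, hh.2.ne]),
    ← ENNReal.rpow_sub _ _ h0 hh.2.ne] at hK
  simpa using hK

theorem eLpNorm_le_of_aecover {E : Type*} [NormedAddCommGroup E] {f : α → E} {p K : ℝ≥0∞}
    {φ : ℕ → Set α} (hφ : AECover μ atTop φ) (hf : AEStronglyMeasurable f μ)
    (hK : ∀ n, eLpNorm f p (μ.restrict (φ n)) ≤ K) : eLpNorm f p μ ≤ K := by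
  refine (Lp.eLpNorm_lim_le_liminf_eLpNorm (fun n => hf.indicator (hφ.measurableSet n)) f
    (hφ.ae_tendsto_indicator f)).trans (liminf_le_of_frequently_le' (.of_forall fun n => ?_))
  rw [eLpNorm_indicator_eq_eLpNorm_restrict (hφ.measurableSet n)]
  exact hK n

theorem enorm_integral_mul_le_eLpNorm_mul_eLpNorm {p q : ℝ≥0} (hpq : p.HolderConjugate q)
    {f g : α → ℂ} (hf : AEStronglyMeasurable f μ) (hg : AEStronglyMeasurable g μ) :
    ‖∫ x, f x * g x ∂μ‖ₑ ≤ eLpNorm f p μ * eLpNorm g q μ := by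
  have := hpq.coe_ennreal
  refine (enorm_integral_le_lintegral_enorm _).trans ?_
  have hle := eLpNorm_smul_le_mul_eLpNorm (r := 1) (p := p) (q := q) hg hf
  rw [eLpNorm_one_eq_lintegral_enorm] at hle
  exact hle

end Duality

theorem HasConvolutionBound.of_holderConjugate {k : ℝ → ℝ} {M : ℝ} (hk : Continuous k)
    (hM : ∀ u, ‖k u‖ ≤ M) (hodd : ∀ u, k (-u) = -k u) {p q C : ℝ≥0} (hpq : p.HolderConjugate q)
    (hC : HasConvolutionBound k q C) : HasConvolutionBound k p C := by
  intro f hf _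
  have hpq' : (p : ℝ).HolderConjugate q := NNReal.holderConjugate_coe_iff.2 hpq
  have hcont : Continuous (k ⋆ f) := continuous_bounded_kernel_convolution hk hM hf
  refine eLpNorm_le_of_aecover (φ := fun n : ℕ => Icc (-n : ℝ) n)
    (aecover_Icc (tendsto_neg_atTop_atBot.comp tendsto_natCast_atTop_atTop)
      tendsto_natCast_atTop_atTop) hcont.aestronglyMeasurable fun n => ?_
  set I := Icc (-n : ℝ) n
  set φ : ℝ → ℂ := fun x => dualPower p ((k ⋆ f) x)
  have hφ : Integrable (I.indicator φ) := by
    have hpow : Continuous fun x => ‖(k ⋆ f) x‖ ^ (p - 1 : ℝ) :=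
      hcont.norm.rpow_const fun _ => .inr hpq'.sub_one_pos.le
    rw [integrable_indicator_iff measurableSet_Icc]
    exact hpow.integrableOn_Icc.mono'
      ((measurable_dualPower p).comp hcont.measurable).aestronglyMeasurable
      (.of_forall fun x => (norm_dualPower hpq'.lt.ne' _).le)
  have hφc : HasCompactSupport (I.indicator φ) :=
    HasCompactSupport.of_support_subset_isCompact isCompact_Icc support_indicator_subset
  have hh : MemLp (k ⋆ f) p (volume.restrict I) := by
    obtain ⟨B, hB⟩ := isCompact_Icc.exists_bound_of_continuousOn hcont.continuousOn
    exact .of_bound hcont.aestronglyMeasurable B (ae_restrict_of_forall_mem measurableSet_Icc hB)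
  refine eLpNorm_le_of_enorm_integral_mul_dualPower_le hpq.ne_zero hh ?_
  have hpair : ∫ x in I, (k ⋆ f) x * φ x = -∫ t, f t * (k ⋆ I.indicator φ) t := by
    rw [← integral_convolution_mul_eq_neg_of_odd hk hM hodd hf hφ,
      ← integral_indicator measurableSet_Icc]
    simp only [I, indicator_mul_right]
  have hφq : eLpNorm (I.indicator φ) q volume
      = eLpNorm (k ⋆ f) p (volume.restrict I) ^ (p - 1 : ℝ) := by
    rw [eLpNorm_indicator_eq_eLpNorm_restrict measurableSet_Icc, eLpNorm_dualPower_comp hpq]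
  rw [hpair, enorm_neg, ← hφq]
  refine (enorm_integral_mul_le_eLpNorm_mul_eLpNorm hpq hf.aestronglyMeasurable
    (continuous_bounded_kernel_convolution hk hM hφ).aestronglyMeasurable).trans ?_
  refine (mul_le_mul_right (hC _ hφ hφc) _).trans_eq ?_
  ring

theorem exists_hasConvolutionBound_conjPoissonKernel {p : ℝ≥0} (hp : 1 < p) :
    ∃ C : ℝ≥0, ∀ y : ℝ, 0 < y → HasConvolutionBound (conjPoissonKernel y) p C := by
  have hle_two {q : ℝ≥0} (hq : 1 < q) (hq2 : q ≤ 2) :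
      ∃ C : ℝ≥0, ∀ y : ℝ, 0 < y → HasConvolutionBound (conjPoissonKernel y) q C := by
    obtain ⟨C, hC⟩ := exists_eLpNorm_conjPoissonKernel_convolution_le_of_nonneg hq hq2
    refine ⟨2 * (2 * C), fun y hy => ?_⟩
    have hk := continuous_conjPoissonKernel hy
    have hM := norm_conjPoissonKernel_le hy
    exact hasConvolutionBound_of_real hk hM hq.le fun f =>
      eLpNorm_convolution_real_le_of_nonneg hk hM hq.le (hC y hy)
  rcases le_total p 2 with hp2 | hp2
  · exact hle_two hp hp2
  · have hpq := NNReal.HolderConjugate.conjExponent hp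
    have hconj_le : p.conjExponent ≤ 2 :=
      div_le_of_le_mul₀ (by positivity) (by positivity) <| by
        rw [mul_tsub, two_mul, mul_one, add_tsub_assoc_of_le hp2]
        exact le_self_add
    obtain ⟨C, hC⟩ := hle_two hpq.symm.lt hconj_le
    exact ⟨C, fun y hy => (hC y hy).of_holderConjugate (continuous_conjPoissonKernel hy)
      (norm_conjPoissonKernel_le hy) (conjPoissonKernel_neg y) hpq⟩

/-- The Hilbert transform `∫_{u > 0} (g(x - u) - g(x + u)) / u du`, without the customary factor
`1 / π`. Pairing `u` with `-u` replaces the principal value by an integral which converges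
absolutely for integrable Lipschitz functions. -/
noncomputable def hilbertTransform (g : ℝ → ℂ) (x : ℝ) : ℂ :=
  ∫ u in Ioi (0 : ℝ), u⁻¹ • (g (x - u) - g (x + u))

section HilbertTransform

theorem convolution_eq_setIntegral_Ioi_of_odd {E : Type*} [NormedAddCommGroup E] [NormedSpace ℝ E]
    {k : ℝ → ℝ} (hodd : ∀ u, k (-u) = -k u) {g : ℝ → E} {x : ℝ}
    (hint : Integrable fun u => k u • g (x - u)) :
    (k ⋆ g) x = ∫ u in Ioi (0 : ℝ), k u • (g (x - u) - g (x + u)) := by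
  have hneg : ∫ u in Iic (0 : ℝ), k u • g (x - u) = ∫ u in Ioi (0 : ℝ), -(k u • g (x + u)) := by
    rw [← neg_zero, ← integral_comp_neg_Ioi]
    simp only [hodd, neg_smul, sub_neg_eq_add, neg_zero]
  have hint_neg : Integrable fun u => -(k u • g (x + u)) := by
    simpa only [hodd, neg_smul, sub_neg_eq_add] using hint.comp_neg
  rw [convolution_lsmul, ← intervalIntegral.integral_Iic_add_Ioi (b := 0) hint.integrableOn
    hint.integrableOn, hneg, ← integral_add hint_neg.integrableOn hint.integrableOn]
  simp only [smul_sub, neg_add_eq_sub]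

variable {g : ℝ → ℂ} {K : ℝ≥0}

theorem integrableOn_inv_smul_sub (hg : LipschitzWith K g) (hgi : Integrable g) (x : ℝ) :
    IntegrableOn (fun u : ℝ => u⁻¹ • (g (x - u) - g (x + u))) (Ioi 0) := by
  have hgc := hg.continuous
  rw [← Ioc_union_Ioi_eq_Ioi zero_le_one]
  refine IntegrableOn.union ?_ ?_
  · refine Measure.integrableOn_of_bounded (M := 2 * K) measure_Ioc_lt_top.ne (by fun_prop) ?_
    refine ae_restrict_of_forall_mem measurableSet_Ioc fun u hu => ?_
    rw [norm_smul, norm_inv, Real.norm_of_nonneg hu.1.le, inv_mul_le_iff₀ hu.1]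
    calc ‖g (x - u) - g (x + u)‖ ≤ K * ‖x - u - (x + u)‖ := hg.norm_sub_le _ _
      _ = u * (2 * K) := by
        rw [show x - u - (x + u) = -(2 * u) by ring, norm_neg,
          Real.norm_of_nonneg (by linarith [hu.1])]
        ring
  · refine ((hgi.comp_sub_left x).sub (hgi.comp_add_left x)).integrableOn.bdd_smul
      (φ := fun u : ℝ => u⁻¹) 1 (by fun_prop)
      (ae_restrict_of_forall_mem measurableSet_Ioi fun u (hu : 1 < u) => ?_)
    rw [norm_inv, Real.norm_of_nonneg (by linarith)]
    exact inv_le_one_of_one_le₀ hu.le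

theorem stronglyMeasurable_hilbertTransform (hg : Continuous g) :
    StronglyMeasurable (hilbertTransform g) :=
  StronglyMeasurable.integral_prod_right'
    (f := fun z : ℝ × ℝ => z.2⁻¹ • (g (z.1 - z.2) - g (z.1 + z.2))) (by fun_prop)

theorem tendsto_conjPoissonKernel_convolution (hgi : Integrable g) {x : ℝ}
    (hx : IntegrableOn (fun u : ℝ => u⁻¹ • (g (x - u) - g (x + u))) (Ioi 0)) :
    Tendsto (fun y => (conjPoissonKernel y ⋆ g) x) (𝓝[>] 0) (𝓝 (hilbertTransform g x)) := by
  have hlim : Tendsto (fun y => ∫ u in Ioi (0 : ℝ), conjPoissonKernel y u • (g (x - u) - g (x + u)))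
      (𝓝[>] 0) (𝓝 (hilbertTransform g x)) := by
    refine tendsto_integral_filter_of_dominated_convergence _ ?_ (.of_forall fun y => ?_)
      hx.norm ?_
    · filter_upwards [self_mem_nhdsWithin] with y hy
      exact ((continuous_conjPoissonKernel hy).aestronglyMeasurable.smul
        ((hgi.comp_sub_left x).sub (hgi.comp_add_left x)).aestronglyMeasurable).restrict
    · refine ae_restrict_of_forall_mem measurableSet_Ioi fun u _ => ?_
      rw [norm_smul, norm_smul, norm_inv]
      gcongr
      exact norm_conjPoissonKernel_le_inv y u
    · refine ae_restrict_of_forall_mem measurableSet_Ioi fun u (hu : 0 < u) => ?_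
      refine Tendsto.smul_const ?_ _
      have hcont : ContinuousAt (fun y => conjPoissonKernel y u) 0 := by
        unfold conjPoissonKernel
        exact continuousAt_const.div (by fun_prop) (by positivity)
      have hzero : conjPoissonKernel 0 u = u⁻¹ := by
        rw [conjPoissonKernel]
        field_simp
        ring
      exact hzero ▸ hcont.tendsto.mono_left nhdsWithin_le_nhds
  refine hlim.congr' ?_
  filter_upwards [self_mem_nhdsWithin] with y hy
  refine (convolution_eq_setIntegral_Ioi_of_odd (conjPoissonKernel_neg y) ?_).symm
  exact (hgi.comp_sub_left x).bdd_smul (φ := conjPoissonKernel y) y⁻¹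
    (continuous_conjPoissonKernel hy).aestronglyMeasurable
    (.of_forall (norm_conjPoissonKernel_le hy))

theorem eLpNorm_hilbertTransform_le {p C : ℝ≥0}
    (hC : ∀ y : ℝ, 0 < y → HasConvolutionBound (conjPoissonKernel y) p C)
    (hg : LipschitzWith K g) (hgc : HasCompactSupport g) :
    eLpNorm (hilbertTransform g) p volume ≤ C * eLpNorm g p volume := by
  have hgi : Integrable g := hg.continuous.integrable_of_hasCompactSupport hgc
  obtain ⟨y, -, hypos, hylim⟩ := exists_seq_strictAnti_tendsto (0 : ℝ)
  have hlim (x : ℝ) : Tendsto (fun n => (conjPoissonKernel (y n) ⋆ g) x) atTop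
      (𝓝 (hilbertTransform g x)) :=
    (tendsto_conjPoissonKernel_convolution hgi (integrableOn_inv_smul_sub hg hgi x)).comp
      (tendsto_nhdsWithin_iff.2 ⟨hylim, .of_forall hypos⟩)
  refine (Lp.eLpNorm_lim_le_liminf_eLpNorm (fun n => ?_) _ (.of_forall hlim)).trans
    (liminf_le_of_frequently_le' (.of_forall fun n => hC _ (hypos n) g hgi hgc))
  exact (continuous_bounded_kernel_convolution (continuous_conjPoissonKernel (hypos n))
    (norm_conjPoissonKernel_le (hypos n)) hgi).aestronglyMeasurable

end HilbertTransform

/-- The operator `T` of the theorem, with arbitrary real exponents `a` and `b`. -/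
noncomputable def halflineOperator (a b : ℝ) (f : ℝ → ℂ) (r : ℝ) : ℂ :=
  ∫ t in Ioo (1 / 2 : ℝ) 1, (((t ^ a : ℝ) : ℂ) * f (r * t) - ((t ^ b : ℝ) : ℂ) * f (r / t))
    / (((1 - t ^ 2) * t : ℝ) : ℂ)

/-- The kernel `e^{-cu} / (1 - e^{-2u})` on `0 < u < log 2`, extended by zero. Under `t = e^{-u}` it
is the kernel `t ^ c / (1 - t²)` on `1/2 < t < 1`. -/
noncomputable def logKernel (c : ℝ) : ℝ → ℝ :=
  (Ioo 0 (Real.log 2)).indicator fun u => Real.exp (-c * u) / (1 - Real.exp (-2 * u))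

/-- The difference on `u > 0` of `logKernel c` and half of `1 / u - u / (1 + u²)`, extended by zero.
The second term has the singularity of `logKernel c` at `0` and is integrable at infinity. -/
noncomputable def logKernelError (c : ℝ) : ℝ → ℝ :=
  (Ioi 0).indicator fun u => logKernel c u - 2⁻¹ * (u⁻¹ - conjPoissonKernel 1 u)

/-- The operator `halflineOperator a b` in the coordinates `r = e^x`, `t = e^{-u}`. -/
noncomputable def logOperator (a b : ℝ) (g : ℝ → ℂ) (x : ℝ) : ℂ :=
  ∫ u, (logKernel a u • g (x - u) - logKernel b u • g (x + u))

section LogKernel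

theorem norm_exp_sub_one_le_mul_exp (x : ℝ) : ‖Real.exp x - 1‖ ≤ |x| * Real.exp |x| := by
  have h := Complex.norm_exp_sub_sum_le_norm_mul_exp x 1
  simp only [Finset.sum_range_one, pow_zero, Nat.factorial_zero, Nat.cast_one, div_one, pow_one,
    Complex.norm_real, Real.norm_eq_abs] at h
  exact_mod_cast h

theorem inv_one_sub_exp_neg_two_mul_mem_Icc {u : ℝ} (hu : 0 < u) :
    (1 - Real.exp (-2 * u))⁻¹ ∈ Icc (2 * u)⁻¹ ((2 * u)⁻¹ + 1) := by
  have hlower : 2 * u / (1 + 2 * u) ≤ 1 - Real.exp (-2 * u) := by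
    have hexp : Real.exp (-2 * u) ≤ (1 + 2 * u)⁻¹ := by
      rw [neg_mul, Real.exp_neg]
      gcongr
      linarith [Real.add_one_le_exp (2 * u)]
    have : 2 * u / (1 + 2 * u) = 1 - (1 + 2 * u)⁻¹ := by
      field_simp
      ring
    linarith
  have hupper : 1 - Real.exp (-2 * u) ≤ 2 * u := by linarith [Real.add_one_le_exp (-2 * u)]
  have hpos : 0 < 2 * u / (1 + 2 * u) := by positivity
  constructor
  · exact inv_anti₀ (hpos.trans_le hlower) hupper
  · refine (inv_anti₀ hpos hlower).trans_eq ?_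
    field_simp

theorem norm_exp_div_one_sub_exp_sub_inv_le (c : ℝ) {u : ℝ} (hu : 0 < u) (hu1 : u ≤ 1) :
    ‖Real.exp (-c * u) / (1 - Real.exp (-2 * u)) - (2 * u)⁻¹‖ ≤ 2 * |c| * Real.exp |c| + 1 := by
  obtain ⟨hlower, hupper⟩ := inv_one_sub_exp_neg_two_mul_mem_Icc hu
  have habs : |-c * u| = |c| * u := by rw [abs_mul, abs_neg, abs_of_pos hu]
  have hnum : ‖Real.exp (-c * u) - 1‖ ≤ |c| * u * Real.exp |c| := by
    refine (norm_exp_sub_one_le_mul_exp _).trans ?_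
    rw [habs]
    gcongr
    exact mul_le_of_le_one_right (abs_nonneg c) hu1
  have hpos : 0 ≤ (1 - Real.exp (-2 * u))⁻¹ := le_trans (by positivity) hlower
  calc ‖Real.exp (-c * u) / (1 - Real.exp (-2 * u)) - (2 * u)⁻¹‖
      = ‖(Real.exp (-c * u) - 1) * (1 - Real.exp (-2 * u))⁻¹
          + ((1 - Real.exp (-2 * u))⁻¹ - (2 * u)⁻¹)‖ := by
        congr 1
        ring
    _ ≤ ‖Real.exp (-c * u) - 1‖ * (1 - Real.exp (-2 * u))⁻¹ + 1 := by
        refine norm_add_le_of_le ?_ ?_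
        · rw [norm_mul, Real.norm_of_nonneg hpos]
        · rw [Real.norm_of_nonneg (sub_nonneg.2 hlower)]
          linarith
    _ ≤ |c| * u * Real.exp |c| * ((2 * u)⁻¹ + 1) + 1 := by gcongr
    _ = |c| * Real.exp |c| * (1 / 2 + u) + 1 := by field_simp
    _ ≤ |c| * Real.exp |c| * 2 + 1 := by
        gcongr
        linarith
    _ = 2 * |c| * Real.exp |c| + 1 := by ring

theorem measurable_logKernel (c : ℝ) : Measurable (logKernel c) :=
  Measurable.indicator (by fun_prop) measurableSet_Ioo

theorem integrable_logKernelError (c : ℝ) : Integrable (logKernelError c) := by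
  have hk := (continuous_conjPoissonKernel one_pos).measurable
  have hmeas : Measurable fun u => logKernel c u - 2⁻¹ * (u⁻¹ - conjPoissonKernel 1 u) :=
    (measurable_logKernel c).sub (by fun_prop)
  rw [logKernelError, integrable_indicator_iff measurableSet_Ioi,
    ← Ioo_union_Ici_eq_Ioi (Real.log_pos one_lt_two)]
  refine IntegrableOn.union ?_ ?_
  · refine Measure.integrableOn_of_bounded (M := 2 * |c| * Real.exp |c| + 1 + 2⁻¹ * 1⁻¹)
      measure_Ioo_lt_top.ne hmeas.aestronglyMeasurable
      (ae_restrict_of_forall_mem measurableSet_Ioo fun u hu => ?_)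
    have hsplit : logKernel c u - 2⁻¹ * (u⁻¹ - conjPoissonKernel 1 u)
        = (Real.exp (-c * u) / (1 - Real.exp (-2 * u)) - (2 * u)⁻¹)
          + 2⁻¹ * conjPoissonKernel 1 u := by
      rw [logKernel, indicator_of_mem hu, mul_inv]
      ring
    rw [hsplit]
    have hu1 : u ≤ 1 := hu.2.le.trans (by linarith [Real.log_two_lt_d9])
    refine norm_add_le_of_le (norm_exp_div_one_sub_exp_sub_inv_le c hu.1 hu1) ?_
    rw [norm_mul, Real.norm_of_nonneg (by positivity : (0 : ℝ) ≤ 2⁻¹)]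
    gcongr
    exact norm_conjPoissonKernel_le one_pos u
  · refine (integrable_inv_one_add_sq.integrableOn.mono' hmeas.aestronglyMeasurable
      (ae_restrict_of_forall_mem measurableSet_Ici fun u (hu : Real.log 2 ≤ u) => ?_))
    have hupos : 1 / 2 < u := by linarith [Real.log_two_gt_d9]
    have : logKernel c u - 2⁻¹ * (u⁻¹ - conjPoissonKernel 1 u)
        = -((2 * u)⁻¹ * (1 + u ^ 2)⁻¹) := by
      rw [logKernel, indicator_of_notMem (fun h => h.2.not_ge hu), conjPoissonKernel]
      field_simp
      ring
    rw [this, norm_neg, Real.norm_of_nonneg (by positivity)]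
    refine mul_le_of_le_one_left (by positivity) (inv_le_one_of_one_le₀ (by linarith))

end LogKernel

section LogOperator

theorem convolution_comp_neg {E : Type*} [NormedAddCommGroup E] [NormedSpace ℝ E]
    (k : ℝ → ℝ) (g : ℝ → E) (x : ℝ) :
    ((fun u => k (-u)) ⋆ g) x = ∫ u, k u • g (x + u) := by
  rw [convolution_lsmul, ← integral_neg_eq_self]
  simp only [neg_neg, sub_neg_eq_add]

theorem logKernel_smul_sub_logKernel_smul {E : Type*} [AddCommGroup E] [Module ℝ E]
    (a b : ℝ) (v w : ℝ → E) (u : ℝ) :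
    logKernel a u • v u - logKernel b u • w u
      = (Ioi (0 : ℝ)).indicator
          (fun u => (2⁻¹ : ℝ) • (u⁻¹ • (v u - w u) - conjPoissonKernel 1 u • (v u - w u))) u
        + (logKernelError a u • v u - logKernelError b u • w u) := by
  rcases lt_or_ge 0 u with hu | hu
  · simp only [logKernelError, indicator_of_mem (mem_Ioi.2 hu)]
    module
  · have hIoi : u ∉ Ioi (0 : ℝ) := hu.not_gt
    have hIoo : u ∉ Ioo 0 (Real.log 2) := fun h => hIoi h.1
    simp [logKernelError, logKernel, hIoi, hIoo]

variable {g : ℝ → ℂ} {K : ℝ≥0}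

theorem logOperator_eq (a b : ℝ) (hg : LipschitzWith K g) (hgc : HasCompactSupport g) :
    logOperator a b g = (2⁻¹ : ℝ) • (hilbertTransform g - (conjPoissonKernel 1 ⋆ g))
      + ((logKernelError a ⋆ g) - ((fun u => logKernelError b (-u)) ⋆ g)) := by
  ext x
  have hgi : Integrable g := hg.continuous.integrable_of_hasCompactSupport hgc
  have hk := continuous_conjPoissonKernel one_pos
  have hk_bound := norm_conjPoissonKernel_le one_pos
  have hconv {k : ℝ → ℝ} (hki : Integrable k) : Integrable fun u => k u • g (x - u) :=
    (hgc.convolutionExists_right (lsmul ℝ ℝ) (μ := volume) hki.locallyIntegrable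
      hg.continuous x).integrable
  have ha : Integrable fun u => logKernelError a u • g (x - u) :=
    hconv (integrable_logKernelError a)
  have hb : Integrable fun u => logKernelError b u • g (x + u) := by
    simpa only [neg_neg, sub_neg_eq_add] using
      (hconv (integrable_logKernelError b).comp_neg).comp_neg
  have hQ : Integrable fun u => conjPoissonKernel 1 u • g (x - u) :=
    (hgi.comp_sub_left x).bdd_smul (φ := conjPoissonKernel 1) _ hk.aestronglyMeasurable
      (.of_forall hk_bound)
  have hQ_odd : Integrable fun u => conjPoissonKernel 1 u • (g (x - u) - g (x + u)) :=
    ((hgi.comp_sub_left x).sub (hgi.comp_add_left x)).bdd_smul (φ := conjPoissonKernel 1) _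
      hk.aestronglyMeasurable (.of_forall hk_bound)
  have hH := integrableOn_inv_smul_sub hg hgi x
  simp only [logOperator,
    logKernel_smul_sub_logKernel_smul a b (fun u => g (x - u)) fun u => g (x + u)]
  have hmain : IntegrableOn (fun u => (2⁻¹ : ℝ) • (u⁻¹ • (g (x - u) - g (x + u))
      - conjPoissonKernel 1 u • (g (x - u) - g (x + u)))) (Ioi 0) :=
    Integrable.smul (2⁻¹ : ℝ) (hH.sub hQ_odd.integrableOn)
  have herr : Integrable fun u => logKernelError a u • g (x - u) - logKernelError b u • g (x + u) :=
    ha.sub hb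
  rw [integral_add (hmain.integrable_indicator measurableSet_Ioi) herr,
    integral_indicator measurableSet_Ioi, integral_smul,
    integral_sub hH hQ_odd.integrableOn, integral_sub ha hb,
    ← convolution_eq_setIntegral_Ioi_of_odd (conjPoissonKernel_neg 1) hQ, ← convolution_comp_neg]
  rfl

theorem stronglyMeasurable_logOperator (a b : ℝ) (hg : Continuous g) :
    StronglyMeasurable (logOperator a b g) := by
  have ha := (measurable_logKernel a).stronglyMeasurable
  have hb := (measurable_logKernel b).stronglyMeasurable
  have hgm := hg.stronglyMeasurable
  exact StronglyMeasurable.integral_prod_right' (f := fun z : ℝ × ℝ =>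
    logKernel a z.2 • g (z.1 - z.2) - logKernel b z.2 • g (z.1 + z.2))
    (((ha.comp_measurable measurable_snd).smul (hgm.comp_measurable (by fun_prop))).sub
      ((hb.comp_measurable measurable_snd).smul (hgm.comp_measurable (by fun_prop))))

theorem exists_eLpNorm_logOperator_le {p : ℝ≥0} (hp : 1 < p) (a b : ℝ) :
    ∃ C : ℝ≥0, ∀ g : ℝ → ℂ, (∃ K, LipschitzWith K g) → HasCompactSupport g →
      eLpNorm (logOperator a b g) p volume ≤ C * eLpNorm g p volume := by
  obtain ⟨C, hC⟩ := exists_hasConvolutionBound_conjPoissonKernel hp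
  have ha := integrable_logKernelError a
  have hb := (integrable_logKernelError b).comp_neg
  set A := eLpNorm (logKernelError a) 1 volume
  set B := eLpNorm (fun u => logKernelError b (-u)) 1 volume
  have hA : A ≠ ∞ := (memLp_one_iff_integrable.2 ha).eLpNorm_ne_top
  have hB : B ≠ ∞ := (memLp_one_iff_integrable.2 hb).eLpNorm_ne_top
  refine ⟨C + C + (A.toNNReal + B.toNNReal), fun g ⟨K, hg⟩ hgc => ?_⟩
  have hp1 : (1 : ℝ≥0∞) ≤ p := mod_cast hp.le
  have hgi : Integrable g := hg.continuous.integrable_of_hasCompactSupport hgc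
  have hgm : AEStronglyMeasurable g volume := hgi.aestronglyMeasurable
  have hHm := (stronglyMeasurable_hilbertTransform hg.continuous).aestronglyMeasurable (μ := volume)
  have hQm : AEStronglyMeasurable (conjPoissonKernel 1 ⋆ g) volume :=
    (continuous_bounded_kernel_convolution (continuous_conjPoissonKernel one_pos)
      (norm_conjPoissonKernel_le one_pos) hgi).aestronglyMeasurable
  have herr {k : ℝ → ℝ} (hk : Integrable k) : AEStronglyMeasurable (k ⋆ g) volume :=
    (hgc.continuous_convolution_right (lsmul ℝ ℝ) hk.locallyIntegrable
      hg.continuous).aestronglyMeasurable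
  have hH := eLpNorm_hilbertTransform_le hC hg hgc
  have hQ := hC 1 one_pos g hgi hgc
  have hYa := eLpNorm_convolution_le hp.le ha.aestronglyMeasurable hgm
  have hYb := eLpNorm_convolution_le hp.le hb.aestronglyMeasurable hgm
  rw [logOperator_eq a b hg hgc]
  refine (eLpNorm_add_le ((hHm.sub hQm).const_smul _) ((herr ha).sub (herr hb)) hp1).trans ?_
  push_cast
  rw [add_mul, ENNReal.coe_toNNReal hA, ENNReal.coe_toNNReal hB, add_mul, add_mul]
  gcongr
  · rw [eLpNorm_const_smul]
    refine (mul_le_of_le_one_left' ?_).trans ((eLpNorm_sub_le hHm hQm hp1).trans (add_le_add hH hQ))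
    simp [enorm_eq_nnnorm]
  · exact (eLpNorm_sub_le (herr ha) (herr hb) hp1).trans (add_le_add hYa hYb)

end LogOperator

section LogarithmicCoordinates

theorem setIntegral_Ioi_zero_eq_integral_exp {E : Type*} [NormedAddCommGroup E] [NormedSpace ℝ E]
    (F : ℝ → E) : ∫ r in Ioi (0 : ℝ), F r = ∫ x, Real.exp x • F (Real.exp x) := by
  rw [← Real.range_exp, ← image_univ, integral_image_eq_integral_abs_deriv_smul MeasurableSet.univ
    (fun x _ => (Real.hasDerivAt_exp x).hasDerivWithinAt) Real.exp_injective.injOn]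
  simp only [abs_of_pos (Real.exp_pos _), setIntegral_univ]

theorem toReal_eLpNorm_comp_exp {E : Type*} [NormedAddCommGroup E] {p : ℝ≥0} (hp : p ≠ 0)
    {F : ℝ → E} (hF : AEStronglyMeasurable (fun x => F (Real.exp x)) volume) :
    (eLpNorm (fun x => F (Real.exp x)) p volume).toReal
      = (∫ r in Ioi (0 : ℝ), ‖F r‖ ^ (p : ℝ) / r) ^ (1 / (p : ℝ)) := by
  rw [toReal_eLpNorm hF, lpNorm_eq_integral_norm_rpow_toReal (mod_cast hp) ENNReal.coe_ne_top hF,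
    setIntegral_Ioi_zero_eq_integral_exp, ENNReal.coe_toReal, one_div]
  simp only [smul_eq_mul, mul_div_cancel₀ _ (Real.exp_pos _).ne']

theorem image_exp_neg_Ioo_zero_log_two :
    (fun u => Real.exp (-u)) '' Ioo 0 (Real.log 2) = Ioo (1 / 2) 1 := by
  have hlog : -Real.log 2 = Real.log (1 / 2) := by rw [one_div, Real.log_inv]
  rw [← image_image Real.exp (fun u => -u), image_neg_Ioo, neg_zero, hlog, Real.image_exp_Ioo,
    Real.exp_log (by norm_num), Real.exp_zero]

theorem setIntegral_Ioo_half_one_eq_integral_exp_neg {E : Type*} [NormedAddCommGroup E]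
    [NormedSpace ℝ E] (F : ℝ → E) :
    ∫ t in Ioo (1 / 2 : ℝ) 1, F t
      = ∫ u in Ioo 0 (Real.log 2), Real.exp (-u) • F (Real.exp (-u)) := by
  rw [← image_exp_neg_Ioo_zero_log_two, integral_image_eq_integral_abs_deriv_smul measurableSet_Ioo
    (f' := fun u => -Real.exp (-u))
    (fun u _ => by simpa using ((hasDerivAt_neg u).exp).hasDerivWithinAt)
    (fun u _ v _ h => by simpa using h)]
  simp only [abs_neg, abs_of_pos (Real.exp_pos _)]

theorem logOperator_comp_exp (a b : ℝ) (f : ℝ → ℂ) (x : ℝ) :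
    logOperator a b (fun x => f (Real.exp x)) x = halflineOperator a b f (Real.exp x) := by
  rw [halflineOperator, setIntegral_Ioo_half_one_eq_integral_exp_neg,
    ← integral_indicator measurableSet_Ioo, logOperator]
  congr 1 with u
  by_cases hu : u ∈ Ioo 0 (Real.log 2)
  · have hpow (c : ℝ) : Real.exp (-u) ^ c = Real.exp (-c * u) := by
      rw [← Real.exp_mul]
      ring_nf
    have hsq : Real.exp (-u) ^ 2 = Real.exp (-2 * u) := by
      rw [← Real.exp_nat_mul]
      ring_nf
    have hne : (Real.exp (-u) : ℂ) ≠ 0 := Complex.ofReal_ne_zero.2 (Real.exp_pos _).ne'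
    simp only [logKernel, indicator_of_mem hu, hpow, hsq, ← Real.exp_add, ← Real.exp_sub,
      sub_neg_eq_add, ← sub_eq_add_neg, Complex.real_smul, Complex.ofReal_mul, Complex.ofReal_div]
    rw [mul_div_assoc', mul_comm (Real.exp (-u) : ℂ), mul_div_mul_right _ _ hne]
    ring
  · simp only [logKernel, indicator_of_notMem hu, zero_smul, sub_zero]

variable {E : Type*} [NormedAddCommGroup E] {f : ℝ → E}

theorem hasCompactSupport_comp_exp (hf : HasCompactSupport f) (hpos : tsupport f ⊆ Ioi 0) :
    HasCompactSupport fun x => f (Real.exp x) := by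
  have hlog : IsCompact (Real.log '' tsupport f) :=
    hf.isCompact.image_of_continuousOn (Real.continuousOn_log.mono fun r hr => (hpos hr).ne')
  refine .of_support_subset_isCompact hlog fun x hx => ?_
  exact ⟨Real.exp x, subset_tsupport f hx, Real.log_exp x⟩

theorem exists_lipschitzWith_comp_exp {K : ℝ≥0} (hK : LipschitzWith K f)
    (hf : HasCompactSupport f) : ∃ K', LipschitzWith K' fun x => f (Real.exp x) := by
  obtain ⟨R, hR⟩ := hf.isCompact.isBounded.exists_norm_le
  obtain ⟨L, hL⟩ := (Real.tendsto_exp_atTop.eventually_gt_atTop R).exists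
  have hzero {x : ℝ} (hx : L ≤ x) : f (Real.exp x) = 0 := by
    refine image_eq_zero_of_notMem_tsupport fun hmem => ?_
    linarith [Real.exp_le_exp.2 hx, hR _ hmem, Real.le_norm_self (Real.exp x)]
  have htrunc : (fun x => f (Real.exp x)) = f ∘ Real.exp ∘ fun x => min x L := by
    ext x
    rcases le_total x L with hx | hx
    · simp only [Function.comp_apply, min_eq_left hx]
    · simp only [Function.comp_apply, min_eq_right hx, hzero hx, hzero le_rfl]
  have hexp : LipschitzOnWith (Real.exp L).toNNReal Real.exp (Iic L) := by
    refine (convex_Iic L).lipschitzOnWith_of_nnnorm_deriv_le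
      (fun _ _ => Real.differentiableAt_exp) fun x hx => ?_
    rw [Real.deriv_exp, ← NNReal.coe_le_coe, coe_nnnorm, Real.coe_toNNReal _ (Real.exp_pos L).le,
      Real.norm_of_nonneg (Real.exp_pos x).le]
    exact Real.exp_le_exp.2 hx
  have hmin : LipschitzOnWith 1 (fun x => min x L) univ :=
    (LipschitzWith.id.min_const L).lipschitzOnWith
  rw [htrunc]
  exact ⟨_, hK.comp (lipschitzOnWith_univ.1 (hexp.comp hmin fun x _ => min_le_right x L))⟩

end LogarithmicCoordinates

theorem singular_integral_halfline_bound_general {p : ℝ} (hp : 1 < p) (a b : ℝ) :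
    ∃ C : ℝ, 0 < C ∧ ∀ f : ℝ → ℂ, (∃ K : ℝ≥0, LipschitzWith K f) → HasCompactSupport f →
      tsupport f ⊆ Ioi (0 : ℝ) →
      (∫ r in Ioi (0 : ℝ), ‖halflineOperator a b f r‖ ^ p / r) ^ (1 / p)
        ≤ C * (∫ r in Ioi (0 : ℝ), ‖f r‖ ^ p / r) ^ (1 / p) := by
  lift p to ℝ≥0 using by linarith
  have hp1 : 1 < p := mod_cast hp
  have hp0 : p ≠ 0 := (zero_lt_one.trans hp1).ne'
  obtain ⟨C, hC⟩ := exists_eLpNorm_logOperator_le hp1 a b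
  refine ⟨C + 1, by positivity, fun f ⟨K, hK⟩ hf hpos => ?_⟩
  have hgc := hasCompactSupport_comp_exp hf hpos
  have hg := exists_lipschitzWith_comp_exp hK hf
  have hcont : Continuous fun x => f (Real.exp x) := hK.continuous.comp Real.continuous_exp
  have hTm := (stronglyMeasurable_logOperator a b hcont).aestronglyMeasurable (μ := volume)
  have hT := ENNReal.toReal_mono (ENNReal.mul_ne_top ENNReal.coe_ne_top
    (hcont.memLp_of_hasCompactSupport hgc).eLpNorm_ne_top) (hC _ hg hgc)
  rw [funext (logOperator_comp_exp a b f)] at hT hTm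
  rw [ENNReal.toReal_mul, ENNReal.coe_toReal] at hT
  rw [← toReal_eLpNorm_comp_exp hp0 hTm, ← toReal_eLpNorm_comp_exp hp0 hcont.aestronglyMeasurable]
  exact hT.trans (by gcongr; exact (lt_add_one _).le)

end

/-- Let `d ≥ 2`, `1 < p < ∞`, `μ, ν ≥ 0`, and set `a = μ + 1 + d/2 − d/p`,
`b = d/p − d/2 + 1 + ν`.  There is a constant `C > 0` such that for every Lipschitz
function `f` with compact support in `(0,∞)`, the singular integral
`Tf(r) = ∫_{1/2}^1 (tᵃ f(rt) − tᵇ f(r/t)) / ((1−t²)t) dt` satisfies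
`‖Tf‖_{L^p(dr/r)} ≤ C ‖f‖_{L^p(dr/r)}`. -/
theorem singular_integral_halfline_bound (d : ℕ) (hd : 2 ≤ d) (p : ℝ) (hp : 1 < p)
    (μ ν : ℝ) (hμ : 0 ≤ μ) (hν : 0 ≤ ν) :
    ∃ C : ℝ, 0 < C ∧
      ∀ f : ℝ → ℂ, (∃ K : NNReal, LipschitzWith K f) → HasCompactSupport f →
        tsupport f ⊆ Set.Ioi (0 : ℝ) →
        (∫ r in Set.Ioi (0 : ℝ),
            ‖∫ t in Set.Ioo (1 / 2 : ℝ) 1,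
                (((t ^ (μ + 1 + (d : ℝ) / 2 - (d : ℝ) / p) : ℝ) : ℂ) * f (r * t) -
                    ((t ^ ((d : ℝ) / p - (d : ℝ) / 2 + 1 + ν) : ℝ) : ℂ) * f (r / t)) /
                  (((1 - t ^ 2) * t : ℝ) : ℂ)‖ ^ p / r) ^ (1 / p)
          ≤ C * (∫ r in Set.Ioi (0 : ℝ), ‖f r‖ ^ p / r) ^ (1 / p) :=
  singular_integral_halfline_bound_general hp _ _
end

section
/- Fix real numbers a > 0 and b > −1. Then there exists a constant C = C(a, b) such that for every natural number n, | Γ(a+n+1)·Γ(b+n+1) / (Γ(a+b+n+1)·Γ(n+1)) − 1 + a·b/(n+1) | ≤ C / (n+1)². In particular, Γ(a+n+1)Γ(b+n+1)/(Γ(a+b+n+1)Γ(n+1)) = 1 − ab/(n+1) + O(1/(n+1)²) as n → ∞. -/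
/-!
For fixed `a`, Gauss's limit formula shows that `u x = log Γ (x + a) - log Γ x - a * log x` tends
to `0` along every progression `x, x + 1, x + 2, …`, so `u x` is minus the sum of the increments of
`u` along it. The functional equation makes these increments elementary,
`u (x + 1) - u x = log (1 + a / x) - a * log (1 + 1 / x)`, and expanding the logarithms to second
order gives `u x = a * (a - 1) / (2 * x) + O (1 / x ^ 2)`. In the logarithm of the gamma quotient
the terms for `a` and `b` and minus the term for `a + b` combine to `-a * b / x`, because
`a * (a - 1) + b * (b - 1) - (a + b) * (a + b - 1) = -2 * a * b`.
-/

open Filter Topology Asymptotics Real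

theorem inv_pow_add_two_le_sub {x : ℝ} (hx : 1 < x) (k : ℕ) :
    x⁻¹ ^ (k + 2) ≤ (x - 1)⁻¹ ^ (k + 1) - x⁻¹ ^ (k + 1) := by
  have : 0 < x := one_pos.trans hx
  have hx₁ : 0 < x - 1 := sub_pos.mpr hx
  have h_le : x⁻¹ ≤ (x - 1)⁻¹ := inv_anti₀ hx₁ (by linarith)
  have h_sub : (x - 1)⁻¹ - x⁻¹ = x⁻¹ * (x - 1)⁻¹ := by field_simp; ring
  calc x⁻¹ ^ (k + 2) = x⁻¹ ^ k * (x⁻¹ * x⁻¹) := by ring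
    _ ≤ x⁻¹ ^ k * (x⁻¹ * (x - 1)⁻¹) := by gcongr
    _ = x⁻¹ ^ k * (x - 1)⁻¹ - x⁻¹ ^ (k + 1) := by rw [← h_sub]; ring
    _ ≤ (x - 1)⁻¹ ^ k * (x - 1)⁻¹ - x⁻¹ ^ (k + 1) := by gcongr
    _ = (x - 1)⁻¹ ^ (k + 1) - x⁻¹ ^ (k + 1) := by rw [← pow_succ]

section

variable {E : Type*} [SeminormedAddCommGroup E]

theorem norm_le_of_norm_sub_succ_le {v : ℕ → E} {g : ℕ → ℝ} (hv : Tendsto v atTop (𝓝 0))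
    (hg : Tendsto g atTop (𝓝 0)) (h : ∀ n, ‖v (n + 1) - v n‖ ≤ g n - g (n + 1)) (n : ℕ) :
    ‖v n‖ ≤ g n := by
  have h_anti : Antitone fun k => g k - ‖v k‖ := antitone_nat_of_succ_le fun k => by
    linarith [h k, norm_sub_norm_le (v k) (v (k + 1)), norm_sub_rev (v k) (v (k + 1))]
  have h_lim : Tendsto (fun k => g k - ‖v k‖) atTop (𝓝 0) := by simpa using hg.sub hv.norm
  exact sub_nonneg.mp (h_anti.le_of_tendsto h_lim n)

theorem norm_le_mul_inv_pow_of_norm_add_one_sub_le {u : ℝ → E} {C x : ℝ} {k : ℕ} (hC : 0 ≤ C)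
    (hx : 1 < x) (h_lim : Tendsto (fun n : ℕ => u (x + n)) atTop (𝓝 0))
    (h_step : ∀ y ≥ x, ‖u (y + 1) - u y‖ ≤ C * y⁻¹ ^ (k + 2)) :
    ‖u x‖ ≤ C * (x - 1)⁻¹ ^ (k + 1) := by
  have h_shift : Tendsto (fun n : ℕ => x + n - 1) atTop atTop :=
    tendsto_atTop_add_const_right _ _
      (tendsto_atTop_add_const_left _ _ tendsto_natCast_atTop_atTop)
  have h_maj : Tendsto (fun n : ℕ => C * (x + n - 1)⁻¹ ^ (k + 1)) atTop (𝓝 0) := by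
    simpa using ((tendsto_inv_atTop_zero.comp h_shift).pow (k + 1)).const_mul C
  suffices h_inc : ∀ n : ℕ, ‖u (x + (n + 1 : ℕ)) - u (x + n)‖ ≤
      C * (x + n - 1)⁻¹ ^ (k + 1) - C * (x + (n + 1 : ℕ) - 1)⁻¹ ^ (k + 1) by
    simpa using norm_le_of_norm_sub_succ_le h_lim h_maj h_inc 0
  intro n
  have h_le : x ≤ x + n := le_add_of_nonneg_right n.cast_nonneg
  have h_succ : x + (n + 1 : ℕ) = x + n + 1 := by push_cast; ring
  calc ‖u (x + (n + 1 : ℕ)) - u (x + n)‖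
      ≤ C * (x + n)⁻¹ ^ (k + 2) := h_succ ▸ h_step (x + n) h_le
    _ ≤ C * ((x + n - 1)⁻¹ ^ (k + 1) - (x + n)⁻¹ ^ (k + 1)) := by
      gcongr
      exact inv_pow_add_two_le_sub (hx.trans_le h_le) k
    _ = C * (x + n - 1)⁻¹ ^ (k + 1) - C * (x + (n + 1 : ℕ) - 1)⁻¹ ^ (k + 1) := by
      rw [h_succ, add_sub_cancel_right, mul_sub]

theorem isBigO_inv_pow_of_add_one_sub_isBigO {u : ℝ → E} {k : ℕ}
    (h_lim : ∀ᶠ x in atTop, Tendsto (fun n : ℕ => u (x + n)) atTop (𝓝 0))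
    (h_step : (fun x => u (x + 1) - u x) =O[atTop] fun x => x⁻¹ ^ (k + 2)) :
    u =O[atTop] fun x => x⁻¹ ^ (k + 1) := by
  obtain ⟨C, hC, h_bound⟩ := h_step.exists_pos
  obtain ⟨A, hA⟩ := eventually_atTop.mp h_bound.bound
  refine IsBigO.of_bound (C * 2 ^ (k + 1)) ?_
  filter_upwards [h_lim, eventually_ge_atTop A, eventually_ge_atTop 2] with x hx_lim hxA hx₂
  have h_inv_nonneg : 0 ≤ (x - 1)⁻¹ := inv_nonneg.mpr (by linarith)
  have h_inv_le : (x - 1)⁻¹ ≤ 2 * x⁻¹ := by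
    rw [← div_eq_mul_inv, inv_le_comm₀ (by linarith) (by positivity), inv_div]
    linarith
  calc ‖u x‖ ≤ C * (x - 1)⁻¹ ^ (k + 1) := by
        refine norm_le_mul_inv_pow_of_norm_add_one_sub_le hC.le (by linarith) hx_lim fun y hy => ?_
        have hy₀ : 0 ≤ y := by linarith
        simpa only [norm_pow, norm_inv, norm_of_nonneg hy₀] using hA y (hxA.trans hy)
    _ ≤ C * (2 * x⁻¹) ^ (k + 1) :=
        mul_le_mul_of_nonneg_left (pow_le_pow_left₀ h_inv_nonneg h_inv_le _) hC.le
    _ = C * 2 ^ (k + 1) * ‖x⁻¹ ^ (k + 1)‖ := by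
        rw [norm_of_nonneg (by positivity), mul_pow, mul_assoc]

end

theorem sum_range_add_log_one_sub_isBigO (n : ℕ) :
    (fun t : ℝ => (∑ i ∈ Finset.range n, t ^ (i + 1) / (i + 1)) + log (1 - t))
      =O[𝓝 0] fun t => t ^ (n + 1) := by
  refine IsBigO.of_bound 2 ?_
  filter_upwards [Metric.ball_mem_nhds (0 : ℝ) one_half_pos] with t ht
  have ht' : |t| < 1 / 2 := by simpa using ht
  calc |(∑ i ∈ Finset.range n, t ^ (i + 1) / (i + 1)) + log (1 - t)|
      ≤ |t| ^ (n + 1) / (1 - |t|) := abs_log_sub_add_sum_range_le (by linarith) n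
    _ ≤ |t| ^ (n + 1) / (1 / 2) := by gcongr; linarith
    _ = 2 * ‖t ^ (n + 1)‖ := by rw [norm_pow, norm_eq_abs]; ring

theorem log_one_add_mul_inv_isBigO (a : ℝ) :
    (fun x => log (1 + a * x⁻¹) - (a * x⁻¹ - a ^ 2 / 2 * x⁻¹ ^ 2)) =O[atTop]
      fun x => x⁻¹ ^ 3 := by
  have h_lim : Tendsto (fun x : ℝ => -a * x⁻¹) atTop (𝓝 0) := by
    simpa using tendsto_inv_atTop_zero.const_mul (-a)
  refine (((sum_range_add_log_one_sub_isBigO 2).comp_tendsto h_lim).congr_left fun x => ?_).trans ?_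
  · simp only [Function.comp_apply, Finset.sum_range_succ, Finset.sum_range_zero]
    push_cast
    ring_nf
  · exact (isBigO_const_mul_self (-a) _ _).pow 3

theorem inv_add_one_sub_inv_isBigO :
    (fun x : ℝ => (x + 1)⁻¹ - (x⁻¹ - x⁻¹ ^ 2)) =O[atTop] fun x => x⁻¹ ^ 3 := by
  refine IsBigO.of_bound 1 ?_
  filter_upwards [eventually_gt_atTop 0] with x hx
  have h_eq : (x + 1)⁻¹ - (x⁻¹ - x⁻¹ ^ 2) = x⁻¹ ^ 2 * (x + 1)⁻¹ := by field_simp; ring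
  rw [h_eq, norm_of_nonneg (by positivity), norm_of_nonneg (by positivity), one_mul, pow_succ x⁻¹ 2]
  gcongr
  linarith

theorem log_Gamma_add_one {x : ℝ} (hx : 0 < x) :
    log (Gamma (x + 1)) = log (Gamma x) + log x := by
  rw [Gamma_add_one hx.ne', log_mul hx.ne' (Gamma_pos_of_pos hx).ne', add_comm]

theorem tendsto_log_Gamma_add_nat_sub {s : ℝ} (hs : 0 < s) :
    Tendsto (fun n : ℕ => log (Gamma (s + (n + 1 : ℕ))) - (s * log n + log n.factorial))
      atTop (𝓝 0) := by
  have h_seq := (BohrMollerup.tendsto_log_gamma hs).const_sub (log (Gamma s))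
  rw [sub_self] at h_seq
  refine h_seq.congr fun n => ?_
  have h_sum := BohrMollerup.f_add_nat_eq (f := fun y => log (Gamma y)) log_Gamma_add_one hs (n + 1)
  rw [h_sum, BohrMollerup.logGammaSeq]
  ring

/-- The logarithm of `Γ (x + a) / (x ^ a * Γ x)`, measuring the error of the approximation
`Γ (x + a) ≈ x ^ a * Γ x`. It is encoded as a combination of logarithms, which agrees with this
reading where `x` and `x + a` are positive. -/
noncomputable def logGammaShift (a x : ℝ) : ℝ :=
  log (Gamma (x + a)) - log (Gamma x) - a * log x

section

variable {a x : ℝ}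

theorem logGammaShift_add_one_sub (hx : 0 < x) (hxa : 0 < x + a) :
    logGammaShift a (x + 1) - logGammaShift a x = log (1 + a * x⁻¹) - a * log (1 + x⁻¹) := by
  have h_log (c : ℝ) (hc : 0 < x + c) : log (1 + c * x⁻¹) = log (x + c) - log x := by
    rw [← log_div hc.ne' hx.ne']
    congr 1
    field_simp
  rw [logGammaShift, logGammaShift, add_right_comm, log_Gamma_add_one hxa, log_Gamma_add_one hx,
    h_log a hxa, ← one_mul x⁻¹, h_log 1 (by positivity)]
  ring

theorem tendsto_logGammaShift_add_nat (hx : 0 < x) (hxa : 0 < x + a) :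
    Tendsto (fun n : ℕ => logGammaShift a (x + n)) atTop (𝓝 0) := by
  rw [← tendsto_add_atTop_iff_nat 1]
  have h_log : Tendsto (fun n : ℕ => a * (log (n + (x + 1)) - log n)) atTop (𝓝 0) := by
    simpa using ((tendsto_log_comp_add_sub_log (x + 1)).comp
      tendsto_natCast_atTop_atTop).const_mul a
  have h_lim := ((tendsto_log_Gamma_add_nat_sub hxa).sub (tendsto_log_Gamma_add_nat_sub hx)).sub
    h_log
  simp only [sub_zero] at h_lim
  refine h_lim.congr fun n => ?_
  have h_arg : (n : ℝ) + (x + 1) = x + (n + 1 : ℕ) := by push_cast; ring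
  rw [logGammaShift, h_arg, add_right_comm x a]
  ring

end

theorem logGammaShift_sub_isBigO (a : ℝ) :
    (fun x => logGammaShift a x - a * (a - 1) / 2 * x⁻¹) =O[atTop] fun x => x⁻¹ ^ 2 := by
  have h_pos : ∀ᶠ x : ℝ in atTop, 0 < x ∧ 0 < x + a :=
    (eventually_gt_atTop 0).and ((eventually_gt_atTop (-a)).mono fun x hx => by linarith)
  refine isBigO_inv_pow_of_add_one_sub_isBigO (h_pos.mono fun x hx => ?_) ?_
  · have h_inv : Tendsto (fun n : ℕ => a * (a - 1) / 2 * (x + n)⁻¹) atTop (𝓝 0) := by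
      simpa using (tendsto_inv_atTop_zero.comp (tendsto_atTop_add_const_left _ x
        tendsto_natCast_atTop_atTop)).const_mul (a * (a - 1) / 2)
    simpa using (tendsto_logGammaShift_add_nat hx.1 hx.2).sub h_inv
  · have h_log := (log_one_add_mul_inv_isBigO a).sub
      ((log_one_add_mul_inv_isBigO 1).const_mul_left a)
    have h_inv := inv_add_one_sub_inv_isBigO.const_mul_left (a * (a - 1) / 2)
    refine (h_log.sub h_inv).congr' ?_ EventuallyEq.rfl
    filter_upwards [h_pos] with x hx
    simp only [one_mul]
    linear_combination -logGammaShift_add_one_sub hx.1 hx.2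

theorem exp_sub_one_sub_mul_isBigO {α : Type*} {l : Filter α} {v g : α → ℝ} (c : ℝ)
    (hg : Tendsto g l (𝓝 0)) (hv : (fun x => v x - c * g x) =O[l] fun x => g x ^ 2) :
    (fun x => exp (v x) - 1 - c * g x) =O[l] fun x => g x ^ 2 := by
  have h_lin : v =O[l] g := by
    have h_sq : (fun x => g x ^ 2) =O[l] g := by
      simpa [sq] using (isBigO_refl g l).mul (hg.isBigO_one ℝ)
    simpa using (hv.trans h_sq).add (isBigO_const_mul_self c g l)
  have h_exp : (fun x => exp (v x) - 1 - v x) =O[l] fun x => g x ^ 2 := by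
    refine (((exp_sub_sum_range_isBigO_pow 2).comp_tendsto
      (h_lin.trans_tendsto hg)).congr_left fun x => ?_).trans (h_lin.pow 2)
    simp [Finset.sum_range_succ, sub_sub]
  exact (h_exp.add hv).congr_left fun x => by ring

theorem exp_logGammaShift_add_sub {a b x : ℝ} (hx : 0 < x) (ha : 0 < a + x)
    (hb : 0 < b + x) (hab : 0 < a + b + x) :
    exp (logGammaShift a x + logGammaShift b x - logGammaShift (a + b) x) =
      Gamma (a + x) * Gamma (b + x) / (Gamma (a + b + x) * Gamma x) := by
  have h_log : logGammaShift a x + logGammaShift b x - logGammaShift (a + b) x =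
      log (Gamma (a + x)) + log (Gamma (b + x)) -
        (log (Gamma (a + b + x)) + log (Gamma x)) := by
    simp only [logGammaShift, add_comm x]
    ring
  rw [h_log, exp_sub, exp_add, exp_add]
  simp only [exp_log, Gamma_pos_of_pos, ha, hb, hab, hx]

theorem gamma_ratio_asymptotic_general (a b : ℝ) :
    (fun x => Gamma (a + x) * Gamma (b + x) / (Gamma (a + b + x) * Gamma x) - 1 + a * b / x)
      =O[atTop] fun x => 1 / x ^ 2 := by
  have h_log : (fun x => logGammaShift a x + logGammaShift b x - logGammaShift (a + b) x
      - -(a * b) * x⁻¹) =O[atTop] fun x => x⁻¹ ^ 2 :=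
    (((logGammaShift_sub_isBigO a).add (logGammaShift_sub_isBigO b)).sub
      (logGammaShift_sub_isBigO (a + b))).congr_left fun x => by ring
  refine (exp_sub_one_sub_mul_isBigO _ tendsto_inv_atTop_zero h_log).congr' ?_
    (.of_forall fun x => by simp)
  filter_upwards [eventually_gt_atTop 0, eventually_gt_atTop (-a), eventually_gt_atTop (-b),
    eventually_gt_atTop (-(a + b))] with x hx ha hb hab
  rw [exp_logGammaShift_add_sub hx (by linarith) (by linarith) (by linarith)]
  ring

/-- Fix real numbers `a > 0` and `b > -1`. Then there exists a constant `C = C(a,b)` such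
that for every natural number `n`,
`|Γ(a+n+1)·Γ(b+n+1)/(Γ(a+b+n+1)·Γ(n+1)) − 1 + a·b/(n+1)| ≤ C/(n+1)²`. -/
theorem gamma_ratio_asymptotic (a b : ℝ) (ha : 0 < a) (hb : -1 < b) :
    ∃ C : ℝ, ∀ n : ℕ,
      |Real.Gamma (a + n + 1) * Real.Gamma (b + n + 1) /
          (Real.Gamma (a + b + n + 1) * Real.Gamma (n + 1))
        - 1 + a * b / (n + 1)| ≤ C / (n + 1) ^ 2 := by
  obtain ⟨C, -, hC⟩ := bound_of_isBigO_nat_atTop ((gamma_ratio_asymptotic_general a b).comp_tendsto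
    (tendsto_atTop_add_const_right _ (1 : ℝ) tendsto_natCast_atTop_atTop))
  refine ⟨C, fun n => ?_⟩
  have h := hC (x := n) (by simp only [Function.comp_apply]; positivity)
  simpa [add_assoc, div_eq_mul_inv] using h
end

section
/- Let (c_m)_{m ≥ 0} be a sequence of real numbers with S := Σ_{m=0}^∞ |c_m| < ∞. For an integer j ≥ 1, a sign ε ∈ {−1, +1}, and θ ∈ ℝ define R_s(θ) = (1/2) Σ_{m ≥ 0, m ≠ j} ( c_{|j−m|} + ε·c_{j+m} ) / ( (j−m)(j+m) ) · sin((m−j)θ) and R_c(θ) = (1/2) Σ_{m ≥ 0, m ≠ j} ( c_{|j−m|} + ε·c_{j+m} ) / ( (j−m)(j+m) ) · cos((m−j)θ). Then: (i) both series converge absolutely for every θ; (ii) |R_s(θ)| ≤ 2S/j and |R_c(θ)| ≤ 2S/j for all θ; (iii) R_s and R_c are differentiable in θ, with derivatives given by termwise differentiation, and |R_s′(θ)| ≤ 2S/j, |R_c′(θ)| ≤ 2S/j for all θ. -/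
/-!
The factor `m - j` in the denominator cancels against the one produced by differentiating
`sin ((m - j) θ)`, and it is at least `1` in absolute value when `m ≠ j`. Hence both the series and
its termwise derivative are dominated by `(|c_{|j-m|}| + |ε| |c_{j+m}|) / j`. Since `m ↦ |j - m|`
takes each value at most twice and `m ↦ j + m` at most once, these majorants sum to at most
`(2 + |ε|) S / j`, and the prefactor `1 / 2` turns this into `(1 + |ε| / 2) S / j`.
-/

section Reindexing

theorem natDist_add_self_right (j m : ℕ) : Nat.dist j (m + j) = m := by
  simp [Nat.dist]

theorem injOn_natDist_range (j : ℕ) : Set.InjOn (Nat.dist j) (Finset.range j) := by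
  intro a ha b hb hab
  simp only [Finset.coe_range, Set.mem_Iio, Nat.dist] at ha hb hab
  lia

theorem summable_comp_natDist_iff {G : Type*} [AddCommGroup G] [TopologicalSpace G]
    [IsTopologicalAddGroup G] {f : ℕ → G} (j : ℕ) :
    (Summable fun m => f (Nat.dist j m)) ↔ Summable f := by
  rw [← summable_nat_add_iff j]
  simp only [natDist_add_self_right]

theorem tsum_comp_natDist_le {f : ℕ → ℝ} (hf : Summable f) (hf₀ : ∀ m, 0 ≤ f m) (j : ℕ) :
    ∑' m, f (Nat.dist j m) ≤ 2 * ∑' m, f m := by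
  have initial_le : ∑ m ∈ Finset.range j, f (Nat.dist j m) ≤ ∑' m, f m := by
    rw [← Finset.sum_image (injOn_natDist_range j)]
    exact hf.sum_le_tsum _ fun m _ => hf₀ m
  have tail_eq : ∑' m, f (Nat.dist j (m + j)) = ∑' m, f m := by
    simp only [natDist_add_self_right]
  rw [← ((summable_comp_natDist_iff j).2 hf).sum_add_tsum_nat_add j, tail_eq]
  linarith

end Reindexing

section BoundedFactors

variable {ι R E : Type*} [SeminormedRing R] [SeminormedAddCommGroup E] [Module R E]
  [IsBoundedSMul R E]

theorem norm_smul_le_of_norm_le_one {a : R} {x : E} (hx : ‖x‖ ≤ 1) : ‖a • x‖ ≤ ‖a‖ :=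
  (norm_smul_le a x).trans (mul_le_of_le_one_right (norm_nonneg a) hx)

theorem summable_norm_smul_of_norm_le_one {a : ι → R} {x : ι → E} (ha : Summable fun i => ‖a i‖)
    (hx : ∀ i, ‖x i‖ ≤ 1) : Summable fun i => ‖a i • x i‖ :=
  ha.of_nonneg_of_le (fun _ => norm_nonneg _) fun i => norm_smul_le_of_norm_le_one (hx i)

theorem norm_tsum_smul_le_of_norm_le_one {a : ι → R} {x : ι → E} (ha : Summable fun i => ‖a i‖)
    (hx : ∀ i, ‖x i‖ ≤ 1) : ‖∑' i, a i • x i‖ ≤ ∑' i, ‖a i‖ :=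
  tsum_of_norm_bounded ha.hasSum fun i => norm_smul_le_of_norm_le_one (hx i)

end BoundedFactors

section DilationSeries

variable {ι 𝕜 E : Type*} [RCLike 𝕜] [NormedAddCommGroup E] [NormedSpace 𝕜 E]

theorem hasDerivAt_tsum_smul_comp_mul [CompleteSpace E] {a ω : ι → 𝕜} {f f' : 𝕜 → E}
    (hf : ∀ t, HasDerivAt f (f' t) t) (hf' : ∀ t, ‖f' t‖ ≤ 1)
    (ha : Summable a) (haω : Summable fun i => ‖a i * ω i‖) (x : 𝕜) :
    HasDerivAt (fun t => ∑' i, a i • f (ω i * t)) (∑' i, a i • ω i • f' (ω i * x)) x := by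
  have hterm (i : ι) (t : 𝕜) :
      HasDerivAt (fun t => a i • f (ω i * t)) (a i • ω i • f' (ω i * t)) t :=
    ((hf _).scomp t (hasDerivAt_const_mul (ω i))).const_smul (a i)
  refine hasDerivAt_tsum haω hterm (fun i t => ?_) (y₀ := 0) ?_ x
  · rw [smul_smul]
    exact norm_smul_le_of_norm_le_one (hf' _)
  · simpa only [mul_zero] using ha.smul_const (f 0)

end DilationSeries

theorem abs_half_mul_tsum_mul_le {ι : Type*} {a x : ι → ℝ} {B : ℝ} (ha : Summable fun i => |a i|)
    (haB : ∑' i, |a i| ≤ B) (hx : ∀ i, |x i| ≤ 1) : |1 / 2 * ∑' i, a i * x i| ≤ B / 2 := by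
  rw [abs_mul, abs_of_pos one_half_pos, one_div_mul_eq_div]
  gcongr
  have tsum_le : |∑' i, a i * x i| ≤ ∑' i, |a i| := by
    simpa only [smul_eq_mul, Real.norm_eq_abs] using
      norm_tsum_smul_le_of_norm_le_one (a := a) (x := x) ha hx
  exact tsum_le.trans haB

/-- The coefficient `(c_{|j-m|} + ε c_{j+m}) / ((j-m)(j+m))` of the remainder series. It vanishes at
`m = j`, where it is a division by zero, so that sums over all `m` stand for sums over `m ≠ j`. -/
noncomputable def remainderCoeff (c : ℕ → ℝ) (ε : ℝ) (j m : ℕ) : ℝ :=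
  (c (Nat.dist j m) + ε * c (j + m)) / (((j : ℝ) - m) * ((j : ℝ) + m))

/-- The remainder `(1/2) ∑_{m ≠ j} coeff_m f ((m-j)θ)` with a general profile `f`; the remainders
`R_s` and `R_c` are the cases `f = sin` and `f = cos`. -/
noncomputable def remainder (c : ℕ → ℝ) (ε : ℝ) (j : ℕ) (f : ℝ → ℝ) (θ : ℝ) : ℝ :=
  (1 / 2) * ∑' m, remainderCoeff c ε j m * f (((m : ℝ) - j) * θ)

/-- The bound `(|c_{|j-m|}| + |ε| |c_{j+m}|) / j` that dominates both the remainder series and its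
termwise derivative. -/
noncomputable def remainderMajorant (c : ℕ → ℝ) (ε : ℝ) (j m : ℕ) : ℝ :=
  (|c (Nat.dist j m)| + |ε| * |c (j + m)|) / j

section Coefficients

variable {c : ℕ → ℝ} {ε : ℝ} {j m : ℕ}

theorem remainderCoeff_self : remainderCoeff c ε j j = 0 := by
  simp [remainderCoeff]

theorem remainderCoeff_mul_sub (h : m ≠ j) :
    remainderCoeff c ε j m * ((m : ℝ) - j) =
      -((c (Nat.dist j m) + ε * c (j + m)) / ((j : ℝ) + m)) := by
  have hsub : (j : ℝ) - m ≠ 0 := sub_ne_zero.2 (by exact_mod_cast h.symm)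
  have hadd : (j : ℝ) + m ≠ 0 := by exact_mod_cast (by lia : j + m ≠ 0)
  rw [remainderCoeff]
  field_simp
  ring

theorem abs_remainderCoeff_mul_sub_le_majorant (hj : 1 ≤ j) :
    |remainderCoeff c ε j m * ((m : ℝ) - j)| ≤ remainderMajorant c ε j m := by
  rcases eq_or_ne m j with rfl | h
  · rw [remainderCoeff_self, zero_mul, abs_zero, remainderMajorant]
    positivity
  have hj₀ : (0 : ℝ) < j := by exact_mod_cast hj
  have hadd : (0 : ℝ) < (j : ℝ) + m := add_pos_of_pos_of_nonneg hj₀ m.cast_nonneg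
  calc |remainderCoeff c ε j m * ((m : ℝ) - j)|
      = |c (Nat.dist j m) + ε * c (j + m)| / ((j : ℝ) + m) := by
        rw [remainderCoeff_mul_sub h, abs_neg, abs_div, abs_of_pos hadd]
    _ ≤ remainderMajorant c ε j m := by
        rw [remainderMajorant, ← abs_mul]
        gcongr
        · exact abs_add_le _ _
        · exact le_add_of_nonneg_right m.cast_nonneg

theorem abs_remainderCoeff_le_abs_mul_sub :
    |remainderCoeff c ε j m| ≤ |remainderCoeff c ε j m * ((m : ℝ) - j)| := by
  rcases eq_or_ne m j with rfl | h
  · simp only [remainderCoeff_self, zero_mul, le_refl]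
  have one_le : (1 : ℝ) ≤ |(m : ℝ) - j| := by
    exact_mod_cast Int.one_le_abs (sub_ne_zero.2 (Nat.cast_injective.ne h) : (m : ℤ) - j ≠ 0)
  rw [abs_mul]
  exact le_mul_of_one_le_right (abs_nonneg _) one_le

theorem summable_remainderMajorant (hc : Summable fun m => |c m|) :
    Summable (remainderMajorant c ε j) :=
  (((summable_comp_natDist_iff j).2 hc).add
    ((hc.comp_injective (add_right_injective j)).mul_left |ε|)).div_const _

theorem tsum_remainderMajorant_le (hc : Summable fun m => |c m|) :
    ∑' m, remainderMajorant c ε j m ≤ (2 + |ε|) * (∑' m, |c m|) / j := by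
  have hdist : Summable fun m => |c (Nat.dist j m)| := (summable_comp_natDist_iff j).2 hc
  have hshift : Summable fun m => |c (j + m)| := hc.comp_injective (add_right_injective j)
  have shift_le : ∑' m, |c (j + m)| ≤ ∑' m, |c m| :=
    tsum_comp_le_tsum_of_inj hc (fun m => abs_nonneg (c m)) (add_right_injective j)
  simp only [remainderMajorant]
  rw [tsum_div_const, hdist.tsum_add (hshift.mul_left |ε|), tsum_mul_left, add_mul]
  gcongr
  exact tsum_comp_natDist_le hc (fun m => abs_nonneg (c m)) j

theorem summable_abs_remainderCoeff_mul_sub (hc : Summable fun m => |c m|) (hj : 1 ≤ j) :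
    Summable fun m : ℕ => |remainderCoeff c ε j m * ((m : ℝ) - j)| :=
  (summable_remainderMajorant hc).of_nonneg_of_le (fun _ => abs_nonneg _)
    fun _ => abs_remainderCoeff_mul_sub_le_majorant hj

theorem tsum_abs_remainderCoeff_mul_sub_le (hc : Summable fun m => |c m|) (hj : 1 ≤ j) :
    ∑' m : ℕ, |remainderCoeff c ε j m * ((m : ℝ) - j)| ≤ (2 + |ε|) * (∑' m, |c m|) / j :=
  ((summable_abs_remainderCoeff_mul_sub hc hj).tsum_le_tsum
    (fun _ => abs_remainderCoeff_mul_sub_le_majorant hj) (summable_remainderMajorant hc)).trans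
    (tsum_remainderMajorant_le hc)

theorem summable_abs_remainderCoeff (hc : Summable fun m => |c m|) (hj : 1 ≤ j) :
    Summable fun m => |remainderCoeff c ε j m| :=
  (summable_abs_remainderCoeff_mul_sub hc hj).of_nonneg_of_le (fun _ => abs_nonneg _)
    fun _ => abs_remainderCoeff_le_abs_mul_sub

theorem tsum_abs_remainderCoeff_le (hc : Summable fun m => |c m|) (hj : 1 ≤ j) :
    ∑' m, |remainderCoeff c ε j m| ≤ (2 + |ε|) * (∑' m, |c m|) / j :=
  ((summable_abs_remainderCoeff hc hj).tsum_le_tsum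
    (fun _ => abs_remainderCoeff_le_abs_mul_sub)
    (summable_abs_remainderCoeff_mul_sub hc hj)).trans
    (tsum_abs_remainderCoeff_mul_sub_le hc hj)

end Coefficients

section Remainder

variable {c : ℕ → ℝ} {ε : ℝ} {j : ℕ} {f f' : ℝ → ℝ}

theorem summable_abs_remainderCoeff_mul (hc : Summable fun m => |c m|) (hj : 1 ≤ j)
    (hf : ∀ t, |f t| ≤ 1) (θ : ℝ) :
    Summable fun m : ℕ => |remainderCoeff c ε j m * f (((m : ℝ) - j) * θ)| := by
  simpa only [smul_eq_mul, Real.norm_eq_abs] using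
    summable_norm_smul_of_norm_le_one (a := remainderCoeff c ε j)
      (x := fun m : ℕ => f (((m : ℝ) - j) * θ)) (summable_abs_remainderCoeff hc hj) fun _ => hf _

theorem abs_remainder_le (hc : Summable fun m => |c m|) (hj : 1 ≤ j) (hf : ∀ t, |f t| ≤ 1)
    (θ : ℝ) : |remainder c ε j f θ| ≤ (2 + |ε|) * (∑' m, |c m|) / j / 2 :=
  abs_half_mul_tsum_mul_le (summable_abs_remainderCoeff hc hj)
    (tsum_abs_remainderCoeff_le hc hj) fun _ => hf _

theorem hasDerivAt_remainder (hc : Summable fun m => |c m|) (hj : 1 ≤ j)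
    (hf : ∀ t, HasDerivAt f (f' t) t) (hf' : ∀ t, |f' t| ≤ 1) (θ : ℝ) :
    HasDerivAt (remainder c ε j f)
      ((1 / 2) * ∑' m : ℕ,
        remainderCoeff c ε j m * (((m : ℝ) - j) * f' (((m : ℝ) - j) * θ))) θ :=
  (hasDerivAt_tsum_smul_comp_mul hf hf' (summable_abs_remainderCoeff hc hj).of_abs
    (summable_abs_remainderCoeff_mul_sub hc hj) θ).const_mul _

theorem abs_deriv_remainder_le (hc : Summable fun m => |c m|) (hj : 1 ≤ j)
    (hf : ∀ t, HasDerivAt f (f' t) t) (hf' : ∀ t, |f' t| ≤ 1) (θ : ℝ) :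
    |deriv (remainder c ε j f) θ| ≤ (2 + |ε|) * (∑' m, |c m|) / j / 2 := by
  rw [(hasDerivAt_remainder hc hj hf hf' θ).deriv]
  simp only [← mul_assoc (remainderCoeff c ε j _)]
  exact abs_half_mul_tsum_mul_le (summable_abs_remainderCoeff_mul_sub hc hj)
    (tsum_abs_remainderCoeff_mul_sub_le hc hj) fun _ => hf' _

end Remainder

theorem perturbation_remainder_bounds_general
    (c : ℕ → ℝ) (hc : Summable fun m => |c m|) (S : ℝ) (hS : S = ∑' m, |c m|)
    (j : ℕ) (hj : 1 ≤ j) (ε : ℝ) (hε : |ε| ≤ 2)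
    (coef : ℕ → ℝ)
    (hcoef : ∀ m, coef m =
      (c (Nat.dist j m) + ε * c (j + m)) / (((j : ℝ) - m) * ((j : ℝ) + m)))
    (Rs Rc : ℝ → ℝ)
    (hRs : ∀ θ, Rs θ = (1 / 2) * ∑' m, coef m * Real.sin (((m : ℝ) - j) * θ))
    (hRc : ∀ θ, Rc θ = (1 / 2) * ∑' m, coef m * Real.cos (((m : ℝ) - j) * θ)) :
    (∀ θ : ℝ, Summable fun m => |coef m * Real.sin (((m : ℝ) - j) * θ)|) ∧
    (∀ θ : ℝ, Summable fun m => |coef m * Real.cos (((m : ℝ) - j) * θ)|) ∧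
    (∀ θ : ℝ, |Rs θ| ≤ 2 * S / j) ∧
    (∀ θ : ℝ, |Rc θ| ≤ 2 * S / j) ∧
    (∀ θ : ℝ, HasDerivAt Rs
      ((1 / 2) * ∑' m, coef m * (((m : ℝ) - j) * Real.cos (((m : ℝ) - j) * θ))) θ) ∧
    (∀ θ : ℝ, HasDerivAt Rc
      ((1 / 2) * ∑' m, coef m * (-((m : ℝ) - j) * Real.sin (((m : ℝ) - j) * θ))) θ) ∧
    (∀ θ : ℝ, |deriv Rs θ| ≤ 2 * S / j) ∧
    (∀ θ : ℝ, |deriv Rc θ| ≤ 2 * S / j) := by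
  obtain rfl : coef = remainderCoeff c ε j := funext hcoef
  obtain rfl : Rs = remainder c ε j Real.sin := funext hRs
  obtain rfl : Rc = remainder c ε j Real.cos := funext hRc
  have hneg_sin (t : ℝ) : |-Real.sin t| ≤ 1 := (abs_neg _).trans_le (Real.abs_sin_le_one t)
  have hbound : (2 + |ε|) * (∑' m, |c m|) / j / 2 ≤ 2 * S / j := by
    have hS₀ : 0 ≤ S := hS ▸ tsum_nonneg fun m => abs_nonneg (c m)
    rw [← hS, div_right_comm]
    gcongr
    nlinarith
  refine ⟨summable_abs_remainderCoeff_mul hc hj Real.abs_sin_le_one,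
    summable_abs_remainderCoeff_mul hc hj Real.abs_cos_le_one,
    fun θ => (abs_remainder_le hc hj Real.abs_sin_le_one θ).trans hbound,
    fun θ => (abs_remainder_le hc hj Real.abs_cos_le_one θ).trans hbound,
    hasDerivAt_remainder hc hj Real.hasDerivAt_sin Real.abs_cos_le_one, fun θ => ?_,
    fun θ => (abs_deriv_remainder_le hc hj Real.hasDerivAt_sin Real.abs_cos_le_one θ).trans hbound,
    fun θ => (abs_deriv_remainder_le hc hj Real.hasDerivAt_cos hneg_sin θ).trans hbound⟩
  simpa only [mul_neg, neg_mul] using hasDerivAt_remainder hc hj Real.hasDerivAt_cos hneg_sin θ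

/-- Let `(c_m)` be absolutely summable with sum `S`, let `j ≥ 1`, `ε ∈ {−1,+1}`, and let
`R_s(θ) = (1/2) Σ_{m ≠ j} (c_{|j−m|} + ε c_{j+m})/((j−m)(j+m)) · sin((m−j)θ)`,
`R_c(θ) = (1/2) Σ_{m ≠ j} (c_{|j−m|} + ε c_{j+m})/((j−m)(j+m)) · cos((m−j)θ)`.
(The `m = j` term is interpreted as `0`, consistently with Lean's `x / 0 = 0`.)
Then both series converge absolutely, `|R_s|, |R_c| ≤ 2S/j`, and `R_s, R_c` are
differentiable with derivatives given by termwise differentiation, also bounded by `2S/j`. -/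
theorem perturbation_remainder_bounds
    (c : ℕ → ℝ) (hc : Summable fun m => |c m|) (S : ℝ) (hS : S = ∑' m, |c m|)
    (j : ℕ) (hj : 1 ≤ j) (ε : ℝ) (hε : ε = -1 ∨ ε = 1)
    (coef : ℕ → ℝ)
    (hcoef : ∀ m, coef m =
      (c (Nat.dist j m) + ε * c (j + m)) / (((j : ℝ) - m) * ((j : ℝ) + m)))
    (Rs Rc : ℝ → ℝ)
    (hRs : ∀ θ, Rs θ = (1 / 2) * ∑' m, coef m * Real.sin (((m : ℝ) - j) * θ))
    (hRc : ∀ θ, Rc θ = (1 / 2) * ∑' m, coef m * Real.cos (((m : ℝ) - j) * θ)) :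
    (∀ θ : ℝ, Summable fun m => |coef m * Real.sin (((m : ℝ) - j) * θ)|) ∧
    (∀ θ : ℝ, Summable fun m => |coef m * Real.cos (((m : ℝ) - j) * θ)|) ∧
    (∀ θ : ℝ, |Rs θ| ≤ 2 * S / j) ∧
    (∀ θ : ℝ, |Rc θ| ≤ 2 * S / j) ∧
    (∀ θ : ℝ, HasDerivAt Rs
      ((1 / 2) * ∑' m, coef m * (((m : ℝ) - j) * Real.cos (((m : ℝ) - j) * θ))) θ) ∧
    (∀ θ : ℝ, HasDerivAt Rc
      ((1 / 2) * ∑' m, coef m * (-((m : ℝ) - j) * Real.sin (((m : ℝ) - j) * θ))) θ) ∧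
    (∀ θ : ℝ, |deriv Rs θ| ≤ 2 * S / j) ∧
    (∀ θ : ℝ, |deriv Rc θ| ≤ 2 * S / j) := by
  exact perturbation_remainder_bounds_general c hc S hS j hj ε
    (by rcases hε with rfl | rfl <;> norm_num) coef hcoef Rs Rc hRs hRc
end
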